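/- arXiv:2305.04428 — 6 statements merged into one kernel-verified Lean document; each statement's English description precedes it below -/
import Mathlib

section
/- Schwarz-lemma estimate for odd CCP functions: let k ≥ 1 and let f : ℝ^k → ℝ be a measurable odd function with ∫ f² dγ_k = 1, and set h := h_{f,f} on [-1,1]. If h(r) ≠ r for some r ∈ (0,1), then h(ρ) < ρ for all ρ ∈ (0,1), h(τ) > τ for all τ ∈ (-1,0), and h is differentiable at 0 with 0 ≤ h'(0) < 1. -/
open scoped BigOperators
open MeasureTheory ProbabilityTheory

/-- The standard Gaussian product measure `γ_k` on `ℝ^k`. -/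
noncomputable def gaussK (k : ℕ) : Measure (Fin k → ℝ) :=
  Measure.pi fun _ => gaussianReal 0 1

/-- `h_{f,g}(ρ) = ∫∫ f(x) g(ρ x + √(1-ρ²) y) dγ_k(x) dγ_k(y)`. -/
noncomputable def hfg {k : ℕ} (f g : (Fin k → ℝ) → ℝ) (ρ : ℝ) : ℝ :=
  ∫ x, ∫ y, f x * g (fun i => ρ * x i + Real.sqrt (1 - ρ ^ 2) * y i)
    ∂(gaussK k) ∂(gaussK k)

/-!
On the span of the exponentials `x ↦ exp ⟨ξ, x⟩` the function `h = h_{f,f}` is explicit: for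
`f = ∑ c_ξ exp ⟨ξ, ·⟩` it equals `∑ d_ξ d_η exp (ρ ⟨ξ, η⟩)` with `d_ξ = c_ξ exp (|ξ|² / 2)`. Since
powers of a Gram matrix are positive semidefinite, this is a power series in `ρ` with nonnegative
coefficients, and their sum `h 1` is at most `‖f‖²` by the Cauchy–Schwarz inequality. The
exponentials span a dense subspace of `L²(γ_k)` and such power series are closed under pointwise
limits, so `h` has this form for every `f`. If `f` is odd with `‖f‖ ≤ 1`, only odd powers occur and
`a ρ ≤ h ρ ≤ a ρ + (1 - a) ρ³` on `(0, 1)` with `a = h' 0 ∈ [0, 1]`. If `a = 1`, then `h ρ = ρ`;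
otherwise `h ρ < ρ`.
-/

section CCP

open Filter Topology

/-- `HasCCPSeries h a c` says that `h` agrees on `(-1, 1)` with the power series whose coefficients
`a n` are nonnegative and have total mass at most `c`. By Schoenberg's theorem, the completely
correlation preserving (CCP) functions are the sums of such series of total mass exactly `1`; only
an upper bound is imposed so that the class is closed under pointwise limits on `(-1, 1)`. -/
structure HasCCPSeries (h : ℝ → ℝ) (a : ℕ → ℝ) (c : ℝ) : Prop where
  nonneg : ∀ n, 0 ≤ a n
  sum_le : ∀ s : Finset ℕ, ∑ n ∈ s, a n ≤ c
  hasSum : ∀ ρ : ℝ, |ρ| < 1 → HasSum (fun n ↦ a n * ρ ^ n) (h ρ)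

namespace HasCCPSeries

variable {h g : ℝ → ℝ} {a : ℕ → ℝ} {b c r ρ : ℝ}

lemma coeff_le (hh : HasCCPSeries h a c) (n : ℕ) : a n ≤ c := by
  simpa using hh.sum_le {n}

lemma mono (hh : HasCCPSeries h a b) (hbc : b ≤ c) : HasCCPSeries h a c :=
  ⟨hh.nonneg, fun s ↦ (hh.sum_le s).trans hbc, hh.hasSum⟩

lemma congr (hh : HasCCPSeries h a c) (heq : ∀ ρ : ℝ, |ρ| < 1 → h ρ = g ρ) :
    HasCCPSeries g a c :=
  ⟨hh.nonneg, hh.sum_le, fun ρ hρ ↦ heq ρ hρ ▸ hh.hasSum ρ hρ⟩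

lemma norm_coeff_mul_pow_le (hh : HasCCPSeries h a c) (n : ℕ) :
    ‖a n * ρ ^ n‖ ≤ c * |ρ| ^ n := by
  rw [norm_mul, norm_pow, Real.norm_of_nonneg (hh.nonneg n), Real.norm_eq_abs]
  gcongr
  exact hh.coeff_le n

lemma coeff_one_mul_le (hh : HasCCPSeries h a c) (hρ₀ : 0 ≤ ρ) (hρ₁ : ρ < 1) : a 1 * ρ ≤ h ρ := by
  have hsum := hh.hasSum ρ (by rwa [abs_of_nonneg hρ₀])
  simpa using le_hasSum hsum 1 fun n _ ↦ mul_nonneg (hh.nonneg n) (pow_nonneg hρ₀ n)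

lemma hasDerivAt_zero (hh : HasCCPSeries h a c) : HasDerivAt h (a 1) 0 := by
  have hseries : HasFPowerSeriesAt h (.ofScalars ℝ a) 0 := by
    rw [hasFPowerSeriesAt_iff]
    filter_upwards [Metric.ball_mem_nhds (0 : ℝ) one_pos] with ρ hρ
    simpa [FormalMultilinearSeries.coeff_ofScalars, mul_comm] using
      hh.hasSum ρ (by simpa using hρ)
  simpa using hseries.hasDerivAt

/-- Averaging over `±ρ` leaves only the odd powers, and every odd power but the first is at most
`ρ ^ 3`. -/
lemma le_of_odd (hh : HasCCPSeries h a c) (hodd : Function.Odd h) (hρ₀ : 0 ≤ ρ) (hρ₁ : ρ < 1) :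
    h ρ ≤ a 1 * ρ + (c - a 1) * ρ ^ 3 := by
  have hρ : |ρ| < 1 := by rwa [abs_of_nonneg hρ₀]
  have hsum : HasSum (fun n ↦ a n * ((ρ ^ n - (-ρ) ^ n) / 2)) (h ρ) := by
    convert! ((hh.hasSum ρ hρ).sub (hh.hasSum (-ρ) (by rwa [abs_neg]))).div_const 2 using 1
    · ext n; ring
    · rw [hodd ρ]; ring
  have hpow (n : ℕ) : (ρ ^ n - (-ρ) ^ n) / 2 ≤ ρ ^ 3 + if n = 1 then ρ - ρ ^ 3 else 0 := by
    rcases n.even_or_odd with hn | hn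
    · have hn1 : n ≠ 1 := by rintro rfl; exact Nat.not_even_one hn
      simpa [hn.neg_pow, hn1] using pow_nonneg hρ₀ 3
    · rw [hn.neg_pow, sub_neg_eq_add, add_self_div_two]
      split_ifs with hn1
      · simp [hn1]
      · have hn3 : 3 ≤ n := by grind
        simpa using pow_le_pow_of_le_one hρ₀ hρ₁.le hn3
  refine hasSum_le_of_sum_le hsum fun s ↦ ?_
  calc ∑ n ∈ s, a n * ((ρ ^ n - (-ρ) ^ n) / 2)
      ≤ ∑ n ∈ s, a n * (ρ ^ 3 + if n = 1 then ρ - ρ ^ 3 else 0) :=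
        Finset.sum_le_sum fun n _ ↦ mul_le_mul_of_nonneg_left (hpow n) (hh.nonneg n)
    _ = (∑ n ∈ s, a n) * ρ ^ 3 + if 1 ∈ s then a 1 * (ρ - ρ ^ 3) else 0 := by
        simp [mul_add, Finset.sum_add_distrib, Finset.sum_mul]
    _ ≤ c * ρ ^ 3 + a 1 * (ρ - ρ ^ 3) := by
        have hcube : ρ ^ 3 ≤ ρ := by simpa using pow_le_pow_of_le_one hρ₀ hρ₁.le (by simp : 1 ≤ 3)
        have hterm : 0 ≤ a 1 * (ρ - ρ ^ 3) := mul_nonneg (hh.nonneg 1) (sub_nonneg.2 hcube)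
        gcongr
        · exact hh.sum_le s
        · split_ifs <;> simp [hterm]
    _ = a 1 * ρ + (c - a 1) * ρ ^ 3 := by ring

lemma coeff_one_lt_one (hh : HasCCPSeries h a 1) (hodd : Function.Odd h)
    (hr : r ∈ Set.Ioo 0 1) (hne : h r ≠ r) : a 1 < 1 := by
  refine (hh.coeff_le 1).lt_of_ne fun ha ↦ hne (le_antisymm ?_ ?_)
  · simpa [ha] using hh.le_of_odd hodd hr.1.le hr.2
  · simpa [ha] using hh.coeff_one_mul_le hr.1.le hr.2

lemma lt_self (hh : HasCCPSeries h a 1) (hodd : Function.Odd h) (ha : a 1 < 1)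
    (hρ : ρ ∈ Set.Ioo 0 1) : h ρ < ρ := by
  have hcube : ρ ^ 3 < ρ := by
    simpa using pow_lt_pow_right_of_lt_one₀ hρ.1 hρ.2 (by simp : 1 < 3)
  calc h ρ ≤ a 1 * ρ + (1 - a 1) * ρ ^ 3 := hh.le_of_odd hodd hρ.1.le hρ.2
    _ < a 1 * ρ + (1 - a 1) * ρ := by gcongr
    _ = ρ := by ring

/-- The coefficient sequences lie in a compact product of intervals; a subsequence converges
coefficientwise, and dominated convergence identifies the limiting series. -/
theorem exists_of_tendsto {H : ℕ → ℝ → ℝ} {A : ℕ → ℕ → ℝ} {C : ℕ → ℝ}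
    (hH : ∀ m, HasCCPSeries (H m) (A m) (C m)) (hC : Tendsto C atTop (𝓝 c))
    (hlim : ∀ ρ : ℝ, |ρ| < 1 → Tendsto (H · ρ) atTop (𝓝 (h ρ))) :
    ∃ a, HasCCPSeries h a c := by
  obtain ⟨M, hM⟩ := hC.bddAbove_range
  have hHM (m : ℕ) : HasCCPSeries (H m) (A m) M := (hH m).mono (hM ⟨m, rfl⟩)
  obtain ⟨a, ha, φ, hφ, hAφ⟩ :=
    (isCompact_univ_pi fun _ : ℕ ↦ isCompact_Icc (a := (0 : ℝ)) (b := M)).tendsto_subseq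
      (x := A) fun m n _ ↦ ⟨(hH m).nonneg n, (hHM m).coeff_le n⟩
  rw [tendsto_pi_nhds] at hAφ
  have hsum_le (s : Finset ℕ) : ∑ n ∈ s, a n ≤ c :=
    le_of_tendsto_of_tendsto' (tendsto_finsetSum s fun n _ ↦ hAφ n) (hC.comp hφ.tendsto_atTop)
      fun m ↦ (hH (φ m)).sum_le s
  refine ⟨a, fun n ↦ (ha n trivial).1, hsum_le, fun ρ hρ ↦ ?_⟩
  have hgeom : Summable fun n ↦ M * |ρ| ^ n :=
    (summable_geometric_of_lt_one (abs_nonneg ρ) hρ).mul_left M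
  have hsummable : Summable fun n ↦ a n * ρ ^ n :=
    .of_norm_bounded hgeom fun n ↦
      le_of_tendsto ((hAφ n).mul_const _).norm
        (.of_forall fun m ↦ (hHM (φ m)).norm_coeff_mul_pow_le n)
  have htsum : Tendsto (fun m ↦ ∑' n, A (φ m) n * ρ ^ n) atTop (𝓝 (∑' n, a n * ρ ^ n)) :=
    tendsto_tsum_of_dominated_convergence hgeom (fun n ↦ (hAφ n).mul_const _)
      (.of_forall fun m n ↦ (hHM (φ m)).norm_coeff_mul_pow_le n)
  simp only [((hH _).hasSum ρ hρ).tsum_eq] at htsum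
  rw [tendsto_nhds_unique ((hlim ρ hρ).comp hφ.tendsto_atTop) htsum]
  exact hsummable.hasSum

end HasCCPSeries

lemma dotProduct_pow {ι R : Type*} [Fintype ι] [CommSemiring R] (u v : ι → R) (n : ℕ) :
    (u ⬝ᵥ v) ^ n = ∑ w : Fin n → ι, (∏ j, u (w j)) * ∏ j, v (w j) := by
  classical
  simp_rw [dotProduct, Fintype.sum_pow, Finset.prod_mul_distrib]

/-- The `n`-th power of a Gram kernel is the Gram kernel of the `n`-th tensor powers. -/
lemma sum_sum_mul_dotProduct_pow_nonneg {ι α R : Type*} [Fintype ι] [CommRing R] [LinearOrder R]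
    [IsStrictOrderedRing R] (s : Finset α) (d : α → R) (v : α → ι → R) (n : ℕ) :
    0 ≤ ∑ i ∈ s, ∑ j ∈ s, d i * d j * (v i ⬝ᵥ v j) ^ n := by
  have hsq : ∑ i ∈ s, ∑ j ∈ s, d i * d j * (v i ⬝ᵥ v j) ^ n =
      ∑ w : Fin n → ι, (∑ i ∈ s, d i * ∏ l, v i (w l)) ^ 2 := by
    simp_rw [dotProduct_pow, sq, Finset.sum_mul_sum, Finset.mul_sum]
    rw [Finset.sum_comm (s := Finset.univ)]
    refine Finset.sum_congr rfl fun i _ ↦ ?_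
    rw [Finset.sum_comm (s := Finset.univ)]
    exact Finset.sum_congr rfl fun j _ ↦ Finset.sum_congr rfl fun w _ ↦ by ring
  rw [hsq]
  positivity

lemma hasCCPSeries_sum_sum_exp_dotProduct {ι α : Type*} [Fintype ι] (s : Finset α) (d : α → ℝ)
    (v : α → ι → ℝ) :
    HasCCPSeries (fun ρ ↦ ∑ i ∈ s, ∑ j ∈ s, d i * d j * Real.exp (ρ * (v i ⬝ᵥ v j)))
      (fun n ↦ (∑ i ∈ s, ∑ j ∈ s, d i * d j * (v i ⬝ᵥ v j) ^ n) / n.factorial)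
      (∑ i ∈ s, ∑ j ∈ s, d i * d j * Real.exp (v i ⬝ᵥ v j)) := by
  have hnonneg (n : ℕ) :
      0 ≤ (∑ i ∈ s, ∑ j ∈ s, d i * d j * (v i ⬝ᵥ v j) ^ n) / n.factorial :=
    div_nonneg (sum_sum_mul_dotProduct_pow_nonneg s d v n) (Nat.cast_nonneg _)
  have hsum (ρ : ℝ) :
      HasSum (fun n ↦ (∑ i ∈ s, ∑ j ∈ s, d i * d j * (v i ⬝ᵥ v j) ^ n) / n.factorial * ρ ^ n)
        (∑ i ∈ s, ∑ j ∈ s, d i * d j * Real.exp (ρ * (v i ⬝ᵥ v j))) := by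
    simp_rw [Finset.sum_div, Finset.sum_mul]
    refine hasSum_sum fun i _ ↦ hasSum_sum fun j _ ↦ ?_
    have hexp := (NormedSpace.expSeries_div_hasSum_exp (ρ * (v i ⬝ᵥ v j))).mul_left (d i * d j)
    rw [← Real.exp_eq_exp_ℝ] at hexp
    convert! hexp using 2 with n
    ring
  have hmass := hsum 1
  simp only [one_pow, mul_one, one_mul] at hmass
  exact ⟨hnonneg, fun t ↦ sum_le_hasSum t (fun n _ ↦ hnonneg n) hmass, fun ρ _ ↦ hsum ρ⟩

end CCP

section ExponentialIntegrals

variable {E : Type*} [NormedAddCommGroup E] [NormedSpace ℝ E] [CompleteSpace E]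
  [MeasurableSpace E] [BorelSpace E] [SecondCountableTopology E] {μ ν : Measure E}

/-- All exponential moments being finite, the complex moment generating function of every linear
form is entire, so that its values on the real axis determine the characteristic function. -/
theorem measure_eq_of_forall_integral_exp_strongDual_eq [IsFiniteMeasure μ] [IsFiniteMeasure ν]
    (hint : ∀ L : StrongDual ℝ E, Integrable (fun x ↦ Real.exp (L x)) μ)
    (heq : ∀ L : StrongDual ℝ E, ∫ x, Real.exp (L x) ∂μ = ∫ x, Real.exp (L x) ∂ν) : μ = ν := by
  refine Measure.ext_of_charFunDual (funext fun L ↦ ?_)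
  have hmgf : mgf L μ = mgf L ν := funext fun t ↦ by simpa [mgf] using heq (t • L)
  have hzero : μ = 0 ↔ ν = 0 := by
    have hmass : μ.real Set.univ = ν.real Set.univ := by simpa using congrFun hmgf 0
    rw [← Measure.measure_univ_eq_zero, ← measureReal_eq_zero_iff, hmass, measureReal_eq_zero_iff,
      Measure.measure_univ_eq_zero]
  have hdom : integrableExpSet L μ = Set.univ :=
    Set.eq_univ_of_forall fun t ↦ by simpa [integrableExpSet] using hint (t • L)
  simpa [charFunDual_apply, complexMGF, mul_comm] using
    eqOn_complexMGF_of_mgf' hmgf hzero (x := Complex.I) (by simp [hdom])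

/-- The densities `g⁺` and `g⁻` define finite measures with the same exponential integrals. -/
theorem ae_eq_zero_of_forall_integral_mul_exp_eq_zero {g : E → ℝ} (hg : Measurable g)
    (hint : ∀ L : StrongDual ℝ E, Integrable (fun x ↦ g x * Real.exp (L x)) μ)
    (hzero : ∀ L : StrongDual ℝ E, ∫ x, g x * Real.exp (L x) ∂μ = 0) : g =ᵐ[μ] 0 := by
  have hg_int : Integrable g μ := by simpa using hint 0
  have := isFiniteMeasure_withDensity_ofReal hg_int.2
  have := isFiniteMeasure_withDensity_ofReal hg_int.neg.2
  have hpos (L : StrongDual ℝ E) : Integrable (fun x ↦ max (g x) 0 * Real.exp (L x)) μ := by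
    simpa [max_mul_of_nonneg _ _ (Real.exp_nonneg _)] using (hint L).pos_part
  have hneg (L : StrongDual ℝ E) : Integrable (fun x ↦ max (-g x) 0 * Real.exp (L x)) μ := by
    simpa [max_mul_of_nonneg _ _ (Real.exp_nonneg _)] using (hint L).neg_part
  have hdensity : μ.withDensity (fun x ↦ .ofReal (g x)) =
      μ.withDensity fun x ↦ .ofReal ((-g) x) := by
    refine measure_eq_of_forall_integral_exp_strongDual_eq (fun L ↦ ?_) fun L ↦ ?_
    · rw [integrable_withDensity_iff hg.ennreal_ofReal (by simp)]
      simpa [ENNReal.toReal_ofReal', mul_comm] using hpos L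
    · rw [integral_withDensity_eq_integral_toReal_smul hg.ennreal_ofReal (by simp),
        integral_withDensity_eq_integral_toReal_smul hg.neg.ennreal_ofReal (by simp)]
      simp only [ENNReal.toReal_ofReal', smul_eq_mul, Pi.neg_apply]
      rw [← sub_eq_zero, ← integral_sub (hpos L) (hneg L)]
      simpa only [← sub_mul, max_zero_sub_max_neg_zero_eq_self] using hzero L
  rw [withDensity_eq_iff hg.ennreal_ofReal.aemeasurable hg.neg.ennreal_ofReal.aemeasurable
    hg_int.lintegral_lt_top.ne] at hdensity
  filter_upwards [hdensity] with x hx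
  have hparts : max (g x) 0 = max (-g x) 0 := by
    simpa only [ENNReal.toReal_ofReal', Pi.neg_apply] using congrArg ENNReal.toReal hx
  rw [← max_zero_sub_max_neg_zero_eq_self (g x), hparts, sub_self, Pi.zero_apply]

end ExponentialIntegrals

section NoiseMap

variable {E : Type*}

/-- The map `(x, y) ↦ ρ x + √(1 - ρ²) y` producing a `ρ`-correlated copy of `x` from an independent
Gaussian vector `y`. -/
noncomputable def noiseMap [AddCommGroup E] [Module ℝ E] (ρ : ℝ) (p : E × E) : E :=
  ρ • p.1 + √(1 - ρ ^ 2) • p.2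

/-- With `ρ = cos θ`, the noise map is a component of the rotation by the angle `θ`, which
preserves a centred Gaussian product. -/
lemma measurePreserving_noiseMap [NormedAddCommGroup E] [NormedSpace ℝ E] [CompleteSpace E]
    [MeasurableSpace E] [BorelSpace E] [SecondCountableTopology E] {μ : Measure E} [IsGaussian μ]
    (hμ : μ[id] = 0) {ρ : ℝ} (hρ : |ρ| ≤ 1) :
    MeasurePreserving (noiseMap ρ) (μ.prod μ) μ := by
  have hrot : MeasurePreserving (ContinuousLinearMap.rotation (E := E) (Real.arccos ρ))
      (μ.prod μ) (μ.prod μ) :=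
    ⟨by fun_prop, IsGaussian.map_rotation_eq_self hμ _⟩
  convert! measurePreserving_fst.comp hrot using 1
  ext p
  simp [noiseMap, ContinuousLinearMap.rotation_apply, Real.sin_arccos,
    Real.cos_arccos (abs_le.1 hρ).1 (abs_le.1 hρ).2]

end NoiseMap

section CorrelationForm

variable {Ω α : Type*} [MeasurableSpace Ω] [MeasurableSpace α] {ν : Measure Ω} {μ : Measure α}
  {φ ψ : Ω → α}

/-- The bilinear form `(F, G) ↦ 𝔼[F(φ) G(ψ)]` on `L²(μ)`, for two random variables `φ` and `ψ` of
law `μ`. -/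
noncomputable def correlationForm (hφ : MeasurePreserving φ ν μ) (hψ : MeasurePreserving ψ ν μ) :
    Lp ℝ 2 μ →L[ℝ] Lp ℝ 2 μ →L[ℝ] ℝ :=
  (innerSL ℝ).bilinearComp
    (Lp.compMeasurePreservingₗᵢ ℝ φ hφ).toContinuousLinearMap
    (Lp.compMeasurePreservingₗᵢ ℝ ψ hψ).toContinuousLinearMap

variable (hφ : MeasurePreserving φ ν μ) (hψ : MeasurePreserving ψ ν μ)

lemma correlationForm_toLp {f g : α → ℝ} (hf : MemLp f 2 μ) (hg : MemLp g 2 μ) :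
    correlationForm hφ hψ (hf.toLp f) (hg.toLp g) = ∫ ω, f (φ ω) * g (ψ ω) ∂ν := by
  change inner ℝ ((hf.comp_measurePreserving hφ).toLp _) ((hg.comp_measurePreserving hψ).toLp _) = _
  rw [L2.inner_def]
  refine integral_congr_ae ?_
  filter_upwards [(hf.comp_measurePreserving hφ).coeFn_toLp,
    (hg.comp_measurePreserving hψ).coeFn_toLp] with ω hfω hgω
  simp [hfω, hgω, mul_comm]

lemma correlationForm_self_le (F : Lp ℝ 2 μ) : correlationForm hφ hψ F F ≤ ‖F‖ ^ 2 :=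
  calc correlationForm hφ hψ F F
      ≤ ‖Lp.compMeasurePreservingₗᵢ ℝ φ hφ F‖ * ‖Lp.compMeasurePreservingₗᵢ ℝ ψ hψ F‖ :=
        real_inner_le_norm (Lp.compMeasurePreservingₗᵢ ℝ φ hφ F)
          (Lp.compMeasurePreservingₗᵢ ℝ ψ hψ F)
    _ = ‖F‖ ^ 2 := by simp only [LinearIsometry.norm_map, sq]

lemma continuous_correlationForm_self : Continuous fun F ↦ correlationForm hφ hψ F F := by
  fun_prop

end CorrelationForm

section Gaussian

variable {k : ℕ} {ρ : ℝ}

instance : IsGaussian (gaussK k) := by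
  have hcoord (i : Fin k) : HasGaussianLaw (fun x : Fin k → ℝ ↦ x i) (gaussK k) :=
    ⟨by
      rw [gaussK, (measurePreserving_eval (fun _ ↦ gaussianReal 0 1) i).map_eq]
      infer_instance⟩
  have hindep : iIndepFun (fun i (x : Fin k → ℝ) ↦ x i) (gaussK k) :=
    iIndepFun_pi fun _ ↦ aemeasurable_id
  simpa using (iIndepFun.hasGaussianLaw hcoord hindep).isGaussian_map

instance (v : NNReal) : (gaussianReal 0 v).IsNegInvariant :=
  ⟨gaussianReal_map_neg.trans (by rw [neg_zero])⟩

instance : (gaussK k).IsNegInvariant :=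
  inferInstanceAs (Measure.pi fun _ ↦ gaussianReal 0 1).IsNegInvariant

lemma integral_id_gaussK : ∫ x, id x ∂gaussK k = 0 := by
  rw [← neg_eq_self, ← integral_neg]
  exact integral_neg_eq_self id (gaussK k)

lemma integral_exp_dotProduct (ξ : Fin k → ℝ) :
    ∫ x, Real.exp (ξ ⬝ᵥ x) ∂gaussK k = Real.exp (ξ ⬝ᵥ ξ / 2) := by
  simp_rw [dotProduct, Finset.sum_div, Real.exp_sum, gaussK]
  rw [integral_fintype_prod_eq_prod fun i y ↦ Real.exp (ξ i * y)]
  refine Finset.prod_congr rfl fun i _ ↦ ?_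
  simpa [mgf, sq] using congrFun (mgf_fun_id_gaussianReal (μ := 0) (v := 1)) (ξ i)

lemma memLp_exp_dotProduct (ξ : Fin k → ℝ) :
    MemLp (fun x ↦ Real.exp (ξ ⬝ᵥ x)) 2 (gaussK k) := by
  have hcont : Continuous fun x ↦ Real.exp (ξ ⬝ᵥ x) := by unfold dotProduct; fun_prop
  rw [memLp_two_iff_integrable_sq hcont.aestronglyMeasurable]
  simp_rw [← Real.exp_nat_mul, dotProduct, Finset.mul_sum, ← mul_assoc, Real.exp_sum]
  exact .fintype_prod (f := fun i y ↦ Real.exp ((2 : ℕ) * ξ i * y))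
    fun i ↦ integrable_exp_mul_gaussianReal _

/-- The exponential function `x ↦ exp ⟨ξ, x⟩` as an element of `L²(γ_k)`. -/
noncomputable def expLp (ξ : Fin k → ℝ) : Lp ℝ 2 (gaussK k) :=
  (memLp_exp_dotProduct ξ).toLp _

theorem topologicalClosure_span_range_expLp :
    (Submodule.span ℝ (Set.range (expLp (k := k)))).topologicalClosure = ⊤ := by
  rw [Submodule.topologicalClosure_eq_top_iff, Submodule.eq_bot_iff]
  intro g hg
  rw [Lp.eq_zero_iff_ae_eq_zero]
  have hdot (L : StrongDual ℝ (Fin k → ℝ)) : ∃ ξ : Fin k → ℝ, ∀ x, L x = ξ ⬝ᵥ x := by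
    obtain ⟨ξ, hξ⟩ := (dotProductEquiv ℝ (Fin k)).surjective L
    exact ⟨ξ, fun x ↦ (DFunLike.congr_fun hξ x).symm⟩
  refine ae_eq_zero_of_forall_integral_mul_exp_eq_zero (Lp.stronglyMeasurable g).measurable
    (fun L ↦ ?_) fun L ↦ ?_
  · obtain ⟨ξ, hξ⟩ := hdot L
    simpa only [hξ, Pi.mul_def] using (Lp.memLp g).integrable_mul (memLp_exp_dotProduct ξ)
  · obtain ⟨ξ, hξ⟩ := hdot L
    have horth : inner ℝ (expLp ξ) g = 0 :=
      (Submodule.mem_orthogonal _ g).1 hg _ (Submodule.subset_span ⟨ξ, rfl⟩)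
    rw [← horth, L2.inner_def]
    refine integral_congr_ae ?_
    filter_upwards [(memLp_exp_dotProduct ξ).coeFn_toLp] with x hx
    simp [expLp, hx, hξ]

lemma integral_exp_mul_exp_noiseMap (hρ : |ρ| ≤ 1) (ξ η : Fin k → ℝ) :
    ∫ p, Real.exp (ξ ⬝ᵥ p.1) * Real.exp (η ⬝ᵥ noiseMap ρ p) ∂(gaussK k).prod (gaussK k) =
      Real.exp (ξ ⬝ᵥ ξ / 2) * Real.exp (η ⬝ᵥ η / 2) * Real.exp (ρ * (ξ ⬝ᵥ η)) := by
  have hsplit (p : (Fin k → ℝ) × (Fin k → ℝ)) :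
      Real.exp (ξ ⬝ᵥ p.1) * Real.exp (η ⬝ᵥ noiseMap ρ p) =
        Real.exp ((ξ + ρ • η) ⬝ᵥ p.1) * Real.exp ((√(1 - ρ ^ 2) • η) ⬝ᵥ p.2) := by
    simp only [noiseMap, ← Real.exp_add, dotProduct_add, add_dotProduct, dotProduct_smul,
      smul_dotProduct, add_assoc]
  have hsqrt : √(1 - ρ ^ 2) * √(1 - ρ ^ 2) = 1 - ρ ^ 2 :=
    Real.mul_self_sqrt (sub_nonneg.2 ((sq_le_one_iff_abs_le_one ρ).2 hρ))
  simp_rw [hsplit]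
  rw [integral_prod_mul (fun x ↦ Real.exp ((ξ + ρ • η) ⬝ᵥ x))
      fun y ↦ Real.exp ((√(1 - ρ ^ 2) • η) ⬝ᵥ y),
    integral_exp_dotProduct, integral_exp_dotProduct, ← Real.exp_add, ← Real.exp_add,
    ← Real.exp_add]
  simp only [dotProduct_add, add_dotProduct, dotProduct_smul, smul_dotProduct, smul_eq_mul,
    ← mul_assoc, hsqrt, dotProduct_comm η ξ]
  ring_nf

/-- The noise stability form `(F, G) ↦ 𝔼[F(x) G(ρ x + √(1 - ρ²) y)]` on `L²(γ_k)`, that is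
`h_{F,G}(ρ)` as a function of `(F, G)`. -/
noncomputable def noiseForm (hρ : |ρ| ≤ 1) :
    Lp ℝ 2 (gaussK k) →L[ℝ] Lp ℝ 2 (gaussK k) →L[ℝ] ℝ :=
  correlationForm (measurePreserving_fst (ν := gaussK k))
    (measurePreserving_noiseMap integral_id_gaussK hρ)

lemma hfg_eq_noiseForm (hρ : |ρ| ≤ 1) {f g : (Fin k → ℝ) → ℝ} (hf : MemLp f 2 (gaussK k))
    (hg : MemLp g 2 (gaussK k)) : hfg f g ρ = noiseForm hρ (hf.toLp f) (hg.toLp g) := by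
  have hint : Integrable (fun p ↦ f p.1 * g (noiseMap ρ p)) ((gaussK k).prod (gaussK k)) :=
    (hf.comp_measurePreserving measurePreserving_fst).integrable_mul
      (hg.comp_measurePreserving (measurePreserving_noiseMap integral_id_gaussK hρ))
  rw [noiseForm, correlationForm_toLp, integral_prod _ hint]
  rfl

lemma noiseForm_expLp (hρ : |ρ| ≤ 1) (ξ η : Fin k → ℝ) :
    noiseForm hρ (expLp ξ) (expLp η) =
      Real.exp (ξ ⬝ᵥ ξ / 2) * Real.exp (η ⬝ᵥ η / 2) * Real.exp (ρ * (ξ ⬝ᵥ η)) := by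
  rw [noiseForm, expLp, expLp, correlationForm_toLp, integral_exp_mul_exp_noiseMap hρ]

lemma noiseForm_sum_smul_expLp (hρ : |ρ| ≤ 1) (s : Finset (Fin k → ℝ)) (c : (Fin k → ℝ) → ℝ) :
    noiseForm hρ (∑ ξ ∈ s, c ξ • expLp ξ) (∑ ξ ∈ s, c ξ • expLp ξ) =
      ∑ ξ ∈ s, ∑ η ∈ s, (c ξ * Real.exp (ξ ⬝ᵥ ξ / 2)) * (c η * Real.exp (η ⬝ᵥ η / 2)) *
        Real.exp (ρ * (ξ ⬝ᵥ η)) := by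
  simp only [map_sum, map_smul, sum_apply, smul_apply,
    smul_eq_mul, noiseForm_expLp, Finset.mul_sum]
  rw [Finset.sum_comm]
  exact Finset.sum_congr rfl fun ξ _ ↦ Finset.sum_congr rfl fun η _ ↦ by ring

end Gaussian

section NoiseStability

open Filter Topology

variable {k : ℕ}

lemma exists_hasCCPSeries_hfg_of_mem_span {F : Lp ℝ 2 (gaussK k)}
    (hF : F ∈ Submodule.span ℝ (Set.range (expLp (k := k)))) :
    ∃ a, HasCCPSeries (hfg F F) a (‖F‖ ^ 2) := by
  obtain ⟨c, rfl⟩ := Finsupp.mem_span_range_iff_exists_finsupp.1 hF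
  set F := c.sum fun ξ x ↦ x • expLp ξ
  have hform {ρ : ℝ} (hρ : |ρ| ≤ 1) := noiseForm_sum_smul_expLp hρ c.support c
  have hmass : ∑ ξ ∈ c.support, ∑ η ∈ c.support, (c ξ * Real.exp (ξ ⬝ᵥ ξ / 2)) *
      (c η * Real.exp (η ⬝ᵥ η / 2)) * Real.exp (ξ ⬝ᵥ η) ≤ ‖F‖ ^ 2 := by
    have hone : |(1 : ℝ)| ≤ 1 := by simp
    simpa only [one_mul] using (hform hone).symm.trans_le (correlationForm_self_le _ _ F)
  refine ⟨_, ((hasCCPSeries_sum_sum_exp_dotProduct c.support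
    (fun ξ ↦ c ξ * Real.exp (ξ ⬝ᵥ ξ / 2)) id).mono hmass).congr fun ρ hρ ↦ ?_⟩
  rw [hfg_eq_noiseForm hρ.le (Lp.memLp F) (Lp.memLp F), Lp.toLp_coeFn]
  exact (hform hρ.le).symm

theorem exists_hasCCPSeries_hfg {f : (Fin k → ℝ) → ℝ} (hf : MemLp f 2 (gaussK k)) :
    ∃ a, HasCCPSeries (hfg f f) a (∫ x, f x ^ 2 ∂gaussK k) := by
  have hmem : hf.toLp f ∈ closure (Submodule.span ℝ (Set.range (expLp (k := k))) : Set _) := by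
    rw [← Submodule.topologicalClosure_coe, topologicalClosure_span_range_expLp]
    trivial
  obtain ⟨u, hu_mem, hu_lim⟩ := mem_closure_iff_seq_limit.1 hmem
  choose A hA using fun m ↦ exists_hasCCPSeries_hfg_of_mem_span (hu_mem m)
  have hnorm : ‖hf.toLp f‖ ^ 2 = ∫ x, f x ^ 2 ∂gaussK k := by
    rw [← real_inner_self_eq_norm_sq, L2.inner_def]
    refine integral_congr_ae ?_
    filter_upwards [hf.coeFn_toLp] with x hx
    simp [hx, sq]
  rw [← hnorm]
  refine HasCCPSeries.exists_of_tendsto hA (hu_lim.norm.pow 2) fun ρ hρ ↦ ?_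
  simp only [hfg_eq_noiseForm hρ.le (Lp.memLp _) (Lp.memLp _), hfg_eq_noiseForm hρ.le hf hf,
    Lp.toLp_coeFn]
  exact ((continuous_correlationForm_self _ _).tendsto _).comp hu_lim

lemma odd_hfg {f : (Fin k → ℝ) → ℝ} (hodd : ∀ᵐ x ∂gaussK k, f (-x) = -f x) (g : (Fin k → ℝ) → ℝ) :
    Function.Odd (hfg f g) := by
  intro ρ
  unfold hfg
  rw [← integral_neg_eq_self, ← integral_neg]
  refine integral_congr_ae ?_
  filter_upwards [hodd] with x hx
  simp [hx, integral_neg]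

end NoiseStability

theorem odd_ccp_schwarz_lemma_general (k : ℕ) (f : (Fin k → ℝ) → ℝ)
    (hf : MemLp f 2 (gaussK k)) (hodd : ∀ᵐ x ∂gaussK k, f (-x) = -f x)
    (hnorm : ∫ x, f x ^ 2 ∂gaussK k ≤ 1) (r : ℝ) (hr : r ∈ Set.Ioo (0 : ℝ) 1)
    (hne : hfg f f r ≠ r) :
    (∀ ρ ∈ Set.Ioo (0 : ℝ) 1, hfg f f ρ < ρ) ∧
    (∀ τ ∈ Set.Ioo (-1 : ℝ) 0, hfg f f τ > τ) ∧
    ∃ L : ℝ, HasDerivAt (hfg f f) L 0 ∧ 0 ≤ L ∧ L < 1 := by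
  obtain ⟨a, ha⟩ := exists_hasCCPSeries_hfg hf
  replace ha := ha.mono hnorm
  have hodd_h : Function.Odd (hfg f f) := odd_hfg hodd f
  have hlt_one : a 1 < 1 := ha.coeff_one_lt_one hodd_h hr hne
  have hlt (ρ : ℝ) (hρ : ρ ∈ Set.Ioo 0 1) : hfg f f ρ < ρ := ha.lt_self hodd_h hlt_one hρ
  refine ⟨hlt, fun τ hτ ↦ ?_, a 1, ha.hasDerivAt_zero, ha.nonneg 1, hlt_one⟩
  have hneg := hlt (-τ) ⟨neg_pos.2 hτ.2, neg_lt.1 hτ.1⟩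
  rwa [hodd_h τ, neg_lt_neg_iff] at hneg

/-- Schwarz-lemma estimate for odd CCP functions `h = h_{f,f}`: if `h(r) ≠ r` for
some `r ∈ (0,1)`, then `h(ρ) < ρ` on `(0,1)`, `h(τ) > τ` on `(-1,0)`, and `h` is
differentiable at `0` with `0 ≤ h'(0) < 1`. -/
theorem odd_ccp_schwarz_lemma (k : ℕ) (hk : 1 ≤ k) (f : (Fin k → ℝ) → ℝ)
    (hmeas : Measurable f) (hodd : ∀ x, f (-x) = - f x)
    (hnorm : ∫ x, (f x) ^ 2 ∂(gaussK k) = 1)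
    (r : ℝ) (hr : r ∈ Set.Ioo (0 : ℝ) 1) (hne : hfg f f r ≠ r) :
    (∀ ρ ∈ Set.Ioo (0 : ℝ) 1, hfg f f ρ < ρ) ∧
    (∀ τ ∈ Set.Ioo (-1 : ℝ) 0, hfg f f τ > τ) ∧
    ∃ L : ℝ, HasDerivAt (hfg f f) L 0 ∧ 0 ≤ L ∧ L < 1 := by
  have hsq : Integrable (fun x ↦ f x ^ 2) (gaussK k) := .of_integral_ne_zero (by simp [hnorm])
  exact odd_ccp_schwarz_lemma_general k f
    ((memLp_two_iff_integrable_sq hmeas.aestronglyMeasurable).2 hsq) (.of_forall hodd) hnorm.le r hr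
    hne
end

section
/- Hybrid correlation transform, block positivity: let m, n ∈ ℕ, r > 0, and let (a_ν), (b_ν), (c_ν) be real sequences with |c_ν| ≤ √(|a_ν| · |b_ν|) for all ν ∈ ℕ, ∑_ν |a_ν| r^ν < ∞ and ∑_ν |b_ν| r^ν < ∞. Let M be a real positive semidefinite (m+n)×(m+n) matrix written in block form M = [[A, S],[Sᵀ, B]] with A of size m×m, B of size n×n, S of size m×n, and suppose every entry of M lies in [-r, r]. Then the block matrix [[F[A], Q[S]],[Q[S]ᵀ, G[B]]] is positive semidefinite, where F[A], Q[S], G[B] denote the entrywise applications of F(x) := ∑_ν |a_ν| x^ν, Q(x) := ∑_ν c_ν x^ν and G(x) := ∑_ν |b_ν| x^ν (all series converge absolutely on [-r, r]). -/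
open scoped BigOperators
open Matrix

/-!
For each degree `ν` the `2 × 2` matrix `[[|a ν|, c ν], [star (c ν), |b ν|]]` is positive
semidefinite, because `‖c ν‖² ≤ |a ν| |b ν|`; repeating its entries along the blocks keeps it so.
By the Schur product theorem its Hadamard product with the `ν`-th Hadamard power of the given block
matrix is again positive semidefinite, and the transformed matrix is the sum of these products
over `ν`, while the positive semidefinite matrices form a closed convex cone.
-/

section ClosedCone

variable {ι X R : Type*} [Ring R] [PartialOrder R] [StarRing R] [TopologicalSpace R]
  [IsTopologicalRing R] [ContinuousStar R] [OrderClosedTopology R]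

lemma isClosed_setOf_posSemidef : IsClosed {M : Matrix ι ι R | M.PosSemidef} := by
  have hermitian : IsClosed {M : Matrix ι ι R | M.IsHermitian} :=
    isClosed_eq continuous_id.matrix_conjTranspose continuous_id
  have nonneg (x : ι →₀ R) :
      IsClosed {M : Matrix ι ι R | 0 ≤ x.sum fun i xi => x.sum fun j xj => star xi * M i j * xj} :=
    isClosed_le continuous_const <| continuous_finsetSum _ fun i _ => continuous_finsetSum _
      fun j _ => (continuous_const.mul (continuous_apply_apply i j)).mul continuous_const
  simpa only [PosSemidef, Set.ofPred_and, Set.ofPred_forall] using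
    hermitian.inter (isClosed_iInter nonneg)

lemma posSemidef_of_hasSum [AddLeftMono R] {T : X → Matrix ι ι R} {P : Matrix ι ι R}
    (hT : ∀ k, (T k).PosSemidef) (h : HasSum T P) : P.PosSemidef :=
  isClosed_setOf_posSemidef.mem_of_tendsto h <|
    .of_forall fun s => posSemidef_sum s fun k _ => hT k

end ClosedCone

section PowerSeries

lemma summable_mul_pow_of_norm_le {R : Type*} [NormedRing R] [NormOneClass R] [CompleteSpace R]
    {d : ℕ → R} {x : R} {r : ℝ} (hd : Summable fun ν => ‖d ν‖ * r ^ ν) (hx : ‖x‖ ≤ r) :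
    Summable fun ν => d ν * x ^ ν :=
  .of_norm_bounded hd fun ν => calc
    ‖d ν * x ^ ν‖ ≤ ‖d ν‖ * ‖x ^ ν‖ := norm_mul_le _ _
    _ ≤ ‖d ν‖ * ‖x‖ ^ ν := by gcongr; exact norm_pow_le x ν
    _ ≤ ‖d ν‖ * r ^ ν := by gcongr

lemma sqrt_mul_le_add {x y : ℝ} (hx : 0 ≤ x) (hy : 0 ≤ y) : √(x * y) ≤ x + y :=
  Real.sqrt_le_iff.2 ⟨add_nonneg hx hy, by nlinarith [mul_nonneg hx hy]⟩

lemma summable_mul_of_le_sqrt_mul {X : Type*} {p q s w : X → ℝ} (hp : ∀ k, 0 ≤ p k)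
    (hq : ∀ k, 0 ≤ q k) (hs : ∀ k, 0 ≤ s k) (hw : ∀ k, 0 ≤ w k)
    (hsqrt : ∀ k, s k ≤ √(p k * q k)) (hpw : Summable fun k => p k * w k)
    (hqw : Summable fun k => q k * w k) : Summable fun k => s k * w k := by
  refine .of_nonneg_of_le (fun k => mul_nonneg (hs k) (hw k)) (fun k => ?_) (hpw.add hqw)
  rw [← add_mul]
  exact mul_le_mul_of_nonneg_right
    ((hsqrt k).trans (sqrt_mul_le_add (hp k) (hq k))) (hw k)

end PowerSeries

section RCLike

open scoped ComplexOrder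

variable {m n ι 𝕜 : Type*} [RCLike 𝕜]

lemma posSemidef_map_pow {M : Matrix ι ι 𝕜} (hM : M.PosSemidef) (k : ℕ) :
    (M.map (· ^ k)).PosSemidef := by
  induction k with
  | zero =>
    have map_pow_zero :
        M.map (· ^ 0) = (1 : Matrix Unit Unit 𝕜).submatrix (fun _ => ()) (fun _ => ()) := by
      ext; simp
    exact map_pow_zero ▸ PosSemidef.one.submatrix _
  | succ k ih =>
    have map_pow_succ : M.map (· ^ (k + 1)) = M.map (· ^ k) ⊙ M := by
      ext; simp [pow_succ]
    exact map_pow_succ ▸ ih.hadamard hM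

lemma posSemidef_of_hasSum_mul_pow {C : ℕ → Matrix ι ι 𝕜} {M P : Matrix ι ι 𝕜}
    (hC : ∀ ν, (C ν).PosSemidef) (hM : M.PosSemidef)
    (h : ∀ i j, HasSum (fun ν => C ν i j * M i j ^ ν) (P i j)) : P.PosSemidef :=
  posSemidef_of_hasSum (fun ν => (hC ν).hadamard (posSemidef_map_pow hM ν)) <|
    Pi.hasSum.2 fun i => Pi.hasSum.2 fun j => h i j

-- At `p = 0` the identity relies on the convention `0⁻¹ = 0`.
lemma fin_two_eq_rankOne_add_schurComplement {p q : ℝ} {c : 𝕜} (hc : p = 0 → c = 0) :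
    !![(p : 𝕜), c; star c, (q : 𝕜)] =
      p⁻¹ • vecMulVec ![(p : 𝕜), star c] (star ![(p : 𝕜), star c]) +
        diagonal ![0, ((q - ‖c‖ ^ 2 / p : ℝ) : 𝕜)] := by
  have cancel (z : 𝕜) (hz : p = 0 → z = 0) : z = (p : 𝕜)⁻¹ * (p * z) := by
    rcases eq_or_ne p 0 with h | h
    · simp [hz h]
    · exact (inv_mul_cancel_left₀ (RCLike.ofReal_ne_zero.2 h) z).symm
  ext i j
  fin_cases i <;> fin_cases j <;>
    simp only [Matrix.add_apply, Matrix.smul_apply, vecMulVec_apply, RCLike.real_smul_eq_coe_mul]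
  · simpa using cancel p (by simp)
  · simpa using cancel c hc
  · simpa [mul_comm (p : 𝕜)] using cancel (star c) (by simpa using hc)
  · simp [RCLike.conj_mul, div_eq_inv_mul]

lemma posSemidef_fin_two_of_norm_le_sqrt {p q : ℝ} {c : 𝕜} (hp : 0 ≤ p) (hq : 0 ≤ q)
    (hc : ‖c‖ ≤ √(p * q)) : (!![(p : 𝕜), c; star c, (q : 𝕜)]).PosSemidef := by
  have hc_sq : ‖c‖ ^ 2 ≤ q * p := by
    simpa only [mul_comm] using (Real.le_sqrt (norm_nonneg c) (mul_nonneg hp hq)).1 hc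
  have hc_zero (h : p = 0) : c = 0 := by simpa [h] using hc
  have hschur : 0 ≤ q - ‖c‖ ^ 2 / p := sub_nonneg.2 (div_le_of_le_mul₀ hp hq hc_sq)
  rw [fin_two_eq_rankOne_add_schurComplement hc_zero]
  refine ((posSemidef_vecMulVec_self_star _).smul (inv_nonneg.2 hp)).add (.diagonal ?_)
  exact Fin.forall_fin_two.2 ⟨le_rfl, RCLike.ofReal_nonneg.2 hschur⟩

lemma posSemidef_fromBlocks_const {p q : ℝ} {c : 𝕜} (hp : 0 ≤ p) (hq : 0 ≤ q)
    (hc : ‖c‖ ≤ √(p * q)) :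
    (fromBlocks (of fun _ _ => (p : 𝕜)) (of fun _ _ => c) (of fun _ _ => star c)
      (of fun _ _ => (q : 𝕜)) : Matrix (m ⊕ n) (m ⊕ n) 𝕜).PosSemidef := by
  convert (posSemidef_fin_two_of_norm_le_sqrt hp hq hc).submatrix
    (Sum.elim (fun _ : m => (0 : Fin 2)) fun _ : n => 1)
  ext (i | i) (j | j) <;> simp

theorem hybrid_block_posSemidef_general {r : ℝ} {a b : ℕ → ℝ} {c : ℕ → 𝕜}
    (ha_nonneg : ∀ ν, 0 ≤ a ν) (hb_nonneg : ∀ ν, 0 ≤ b ν) (hc : ∀ ν, ‖c ν‖ ≤ √(a ν * b ν))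
    (ha : Summable fun ν => a ν * r ^ ν) (hb : Summable fun ν => b ν * r ^ ν)
    {A : Matrix m m 𝕜} {B : Matrix n n 𝕜} {S : Matrix m n 𝕜}
    (hM : (fromBlocks A S Sᴴ B).PosSemidef) (hEntries : ∀ i j, ‖fromBlocks A S Sᴴ B i j‖ ≤ r) :
    (fromBlocks
      (of fun i j => ∑' ν, (a ν : 𝕜) * A i j ^ ν)
      (of fun i j => ∑' ν, c ν * S i j ^ ν)
      (of fun i j => ∑' ν, c ν * S i j ^ ν)ᴴ
      (of fun i j => ∑' ν, (b ν : 𝕜) * B i j ^ ν)).PosSemidef := by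
  have hQ (i : m) (j : n) : HasSum (fun ν => c ν * S i j ^ ν) (∑' ν, c ν * S i j ^ ν) := by
    have hS : ‖S i j‖ ≤ r := hEntries (.inl i) (.inr j)
    have hr : 0 ≤ r := (norm_nonneg _).trans hS
    exact (summable_mul_pow_of_norm_le (summable_mul_of_le_sqrt_mul ha_nonneg hb_nonneg
      (fun _ => norm_nonneg _) (fun ν => pow_nonneg hr ν) hc ha hb) hS).hasSum
  refine posSemidef_of_hasSum_mul_pow
    (fun ν => posSemidef_fromBlocks_const (ha_nonneg ν) (hb_nonneg ν) (hc ν)) hM ?_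
  rintro (i | i) (j | j)
  · refine (summable_mul_pow_of_norm_le ?_ (hEntries (.inl i) (.inl j))).hasSum
    simpa [abs_of_nonneg, ha_nonneg] using ha
  · exact hQ i j
  · simpa using (hQ j i).star
  · refine (summable_mul_pow_of_norm_le ?_ (hEntries (.inr i) (.inr j))).hasSum
    simpa [abs_of_nonneg, hb_nonneg] using hb

end RCLike

/-- Hybrid correlation transform, block positivity: if `|c ν| ≤ √(|a ν| |b ν|)` and
`∑ |a ν| rᵛ, ∑ |b ν| rᵛ < ∞`, then the entrywise application of
`F(x) = ∑ |a ν| xᵛ`, `Q(x) = ∑ c ν xᵛ`, `G(x) = ∑ |b ν| xᵛ` to the blocks of a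
positive semidefinite block matrix `[[A, S], [Sᵀ, B]]` with entries in `[-r, r]`
yields a positive semidefinite block matrix `[[F[A], Q[S]], [Q[S]ᵀ, G[B]]]`. -/
theorem hybrid_block_posSemidef (m n : ℕ) (r : ℝ) (hr : 0 < r)
    (a b c : ℕ → ℝ)
    (hc : ∀ ν, |c ν| ≤ Real.sqrt (|a ν| * |b ν|))
    (ha : Summable fun ν => |a ν| * r ^ ν)
    (hb : Summable fun ν => |b ν| * r ^ ν)
    (A : Matrix (Fin m) (Fin m) ℝ) (B : Matrix (Fin n) (Fin n) ℝ)
    (S : Matrix (Fin m) (Fin n) ℝ)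
    (hM : (Matrix.fromBlocks A S Sᵀ B).PosSemidef)
    (hEntries : ∀ i j, Matrix.fromBlocks A S Sᵀ B i j ∈ Set.Icc (-r) r) :
    (Matrix.fromBlocks
      (Matrix.of fun i j => ∑' ν : ℕ, |a ν| * A i j ^ ν)
      (Matrix.of fun i j => ∑' ν : ℕ, c ν * S i j ^ ν)
      (Matrix.of fun i j => ∑' ν : ℕ, c ν * S i j ^ ν)ᵀ
      (Matrix.of fun i j => ∑' ν : ℕ, |b ν| * B i j ^ ν)).PosSemidef := by
  simpa only [conjTranspose_eq_transpose_of_trivial, RCLike.ofReal_real_eq_id, id_eq] using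
    hybrid_block_posSemidef_general (𝕜 := ℝ) (fun ν => abs_nonneg (a ν))
      (fun ν => abs_nonneg (b ν)) hc ha hb hM fun i j => abs_le.2 (hEntries i j)
end

section
/- A complex positive semidefinite matrix all of whose entries have modulus 1 has rank one with unimodular factor: if n ∈ ℕ and A is a complex n×n positive semidefinite matrix with |A i j| = 1 for all i, j, then there exists x ∈ ℂⁿ with |x i| = 1 for all i and A i j = x i · conj(x j) for all i, j (i.e. A = x x*). -/
open scoped BigOperators ComplexOrder

/-! If a principal `2 × 2` minor on `{i, j}` of a positive semidefinite matrix `A` vanishes, then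
`A i j • eᵢ - A i i • eⱼ` is isotropic for `A`, hence lies in the kernel of `A`: columns `i` and `j`
are proportional. When all entries are unimodular, the diagonal is `1` and all these minors vanish,
so every column is a multiple of any given one. -/

section RCLike

open Matrix

variable {ι 𝕜 : Type*} [RCLike 𝕜] {A : Matrix ι ι 𝕜}

theorem mulVec_eq_zero_of_principal_minor_eq_zero [Fintype ι] [DecidableEq ι]
    (hA : A.PosSemidef) {i j : ι} (hminor : A i i * A j j = A i j * A j i) :
    A *ᵥ (Pi.single i (A i j) - Pi.single j (A i i)) = 0 := by
  set v : ι → 𝕜 := Pi.single i (A i j) - Pi.single j (A i i)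
  have mulVec_apply (k : ι) : (A *ᵥ v) k = A k i * A i j - A k j * A i i := by
    simp [v, mulVec_sub, mul_comm]
  have apply_i : (A *ᵥ v) i = 0 := by rw [mulVec_apply]; ring
  have apply_j : (A *ᵥ v) j = 0 := by rw [mulVec_apply]; linear_combination -hminor
  have isotropic : star v ⬝ᵥ A *ᵥ v = 0 := by
    simp only [v, star_sub, ← Pi.single_star, sub_dotProduct, single_dotProduct]
    rw [apply_i, apply_j, mul_zero, mul_zero, sub_zero]
  exact (hA.dotProduct_mulVec_zero_iff v).1 isotropic

theorem col_mul_diag_eq_of_principal_minor_eq_zero (hA : A.PosSemidef) {i j : ι}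
    (hminor : A i i * A j j = A i j * A j i) (k : ι) :
    A k j * A i i = A k i * A i j := by
  -- Restricting to the three indices involved allows `ι` to be infinite.
  have kernel := mulVec_eq_zero_of_principal_minor_eq_zero (hA.submatrix ![i, j, k])
    (i := 0) (j := 1) hminor
  rw [mulVec_sub, mulVec_single, mulVec_single, sub_eq_zero] at kernel
  exact (congrFun kernel 2).symm

theorem diag_eq_one_of_norm_eq_one (hA : A.PosSemidef) {i : ι} (hi : ‖A i i‖ = 1) :
    A i i = 1 := by
  rw [← RCLike.norm_of_nonneg' hA.diag_nonneg, hi, RCLike.ofReal_one]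

theorem eq_vecMulVec_col_of_norm_eq_one (hA : A.PosSemidef) (hdiag : ∀ i, ‖A i i‖ = 1) {k : ι}
    (hcol : ∀ i, ‖A i k‖ = 1) :
    A = vecMulVec (A.col k) (star (A.col k)) := by
  have diag_eq_one (i : ι) : A i i = 1 := diag_eq_one_of_norm_eq_one hA (hdiag i)
  have row_eq_star_col (j : ι) : A k j = star (A j k) := (hA.isHermitian.apply k j).symm
  ext i j
  have minor_eq_zero : A k k * A j j = A k j * A j k := by
    rw [diag_eq_one, diag_eq_one, row_eq_star_col, RCLike.star_def, RCLike.conj_mul, hcol]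
    simp
  calc
    A i j = A i j * A k k := by rw [diag_eq_one, mul_one]
    _ = A i k * A k j := col_mul_diag_eq_of_principal_minor_eq_zero hA minor_eq_zero i
    _ = A i k * star (A j k) := by rw [row_eq_star_col]

theorem posSemidef_unimodular_entries_rank_one_general (hA : A.PosSemidef)
    (h1 : ∀ i j, ‖A i j‖ = 1) :
    ∃ x : ι → 𝕜, (∀ i, ‖x i‖ = 1) ∧ ∀ i j, A i j = x i * (starRingEnd 𝕜) (x j) := by
  rcases isEmpty_or_nonempty ι with _ | ⟨⟨k⟩⟩
  · exact ⟨isEmptyElim, isEmptyElim, isEmptyElim⟩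
  · have rank_one := eq_vecMulVec_col_of_norm_eq_one hA (fun i ↦ h1 i i) (fun i ↦ h1 i k)
    exact ⟨A.col k, fun i ↦ h1 i k, fun i j ↦ congrFun₂ rank_one i j⟩

end RCLike

/-- A complex positive semidefinite matrix all of whose entries have modulus 1 is of
the form `x x*` for a vector `x` with unimodular entries. -/
theorem posSemidef_unimodular_entries_rank_one (n : ℕ)
    (A : Matrix (Fin n) (Fin n) ℂ) (hA : A.PosSemidef)
    (h1 : ∀ i j, ‖A i j‖ = 1) :
    ∃ x : Fin n → ℂ, (∀ i, ‖x i‖ = 1) ∧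
      ∀ i j, A i j = x i * (starRingEnd ℂ) (x j) :=
  posSemidef_unimodular_entries_rank_one_general hA h1
end

section
/- Block-completion characterisation of quantum correlation matrices, and absolute convexity: for a complex m×n matrix S the following are equivalent: (a) S ∈ Q_{m,n}; (b) there exist an m×m correlation matrix A and an n×n correlation matrix B such that the (m+n)×(m+n) block matrix [[A, S],[Sᴴ, B]] is a correlation matrix. Moreover Q_{m,n} is absolutely convex: if S₁, S₂ ∈ Q_{m,n} and λ, μ ∈ ℂ with |λ| + |μ| ≤ 1, then λ·S₁ + μ·S₂ ∈ Q_{m,n}. -/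
open scoped BigOperators ComplexOrder
open Matrix

/-- `S` is a quantum correlation matrix: `S i j = (u i)* (v j)` for families of unit
vectors `u`, `v` in some finite-dimensional complex Hilbert space `ℂ^d`. -/
def QuantumCorrelation {ι κ : Type*} (S : Matrix ι κ ℂ) : Prop :=
  ∃ (d : ℕ) (u : ι → EuclideanSpace ℂ (Fin d)) (v : κ → EuclideanSpace ℂ (Fin d)),
    (∀ i, ‖u i‖ = 1) ∧ (∀ j, ‖v j‖ = 1) ∧ ∀ i j, S i j = (inner ℂ (u i) (v j) : ℂ)

/-!
A correlation matrix is the same as a Gram matrix of unit vectors, so a block completion of `S`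
is a joint Gram matrix of the two families of unit vectors realising `S`.

Unit vectors may be relaxed to vectors of norm at most one: two extra dimensions, one for each
family, supply the missing length without changing any `⟪u i, v j⟫`. For absolute convexity, write
`lam = c ^ 2` and `mu = e ^ 2`; then `lam • S₁ + mu • S₂` is realised by the vectors
`(conj c • u₁ i, conj e • u₂ i)` and `(c • v₁ j, e • v₂ j)`, all of squared norm `‖lam‖ + ‖mu‖ ≤ 1`.
-/

section CorrelationMatrix

variable {𝕜 ι : Type*} [RCLike 𝕜]

/-- A correlation matrix: positive semidefinite with unit diagonal. It is spelled as a conjunction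
so that it unfolds to the condition in the block characterisation of `QuantumCorrelation`. -/
def IsCorrelationMatrix (M : Matrix ι ι 𝕜) : Prop :=
  M.PosSemidef ∧ ∀ i, M i i = 1

theorem isCorrelationMatrix_gram_iff [Finite ι] {E : Type*} [SeminormedAddCommGroup E]
    [InnerProductSpace 𝕜 E] {w : ι → E} :
    IsCorrelationMatrix (gram 𝕜 w) ↔ ∀ i, ‖w i‖ = 1 := by
  refine (and_iff_right (posSemidef_gram 𝕜 w)).trans (forall_congr' fun i => ?_)
  rw [gram_apply, inner_self_eq_norm_sq_to_K, ← RCLike.ofReal_pow, ← RCLike.ofReal_one,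
    RCLike.ofReal_inj, pow_eq_one_iff_of_nonneg (norm_nonneg _) two_ne_zero]

open scoped MatrixOrder Matrix.Norms.L2Operator in
theorem exists_gram_eq_of_posSemidef [Fintype ι] {M : Matrix ι ι 𝕜} (hM : M.PosSemidef) :
    ∃ w : ι → EuclideanSpace 𝕜 ι, gram 𝕜 w = M := by
  classical
  obtain ⟨C, rfl⟩ := CStarAlgebra.nonneg_iff_eq_star_mul_self.mp hM.nonneg
  exact ⟨fun i => WithLp.toLp 2 (C.col i),
    gram_eq_conjTranspose_mul (EuclideanSpace.basisFun ι 𝕜) _⟩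

theorem IsCorrelationMatrix.exists_gram_eq [Fintype ι] {M : Matrix ι ι 𝕜}
    (hM : IsCorrelationMatrix M) :
    ∃ w : ι → EuclideanSpace 𝕜 ι, (∀ i, ‖w i‖ = 1) ∧ gram 𝕜 w = M := by
  obtain ⟨w, rfl⟩ := exists_gram_eq_of_posSemidef hM.1
  exact ⟨w, isCorrelationMatrix_gram_iff.mp hM, rfl⟩

theorem gram_sumElim {κ E : Type*} [SeminormedAddCommGroup E] [InnerProductSpace 𝕜 E]
    (u : ι → E) (v : κ → E) :
    gram 𝕜 (Sum.elim u v) =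
      fromBlocks (gram 𝕜 u) (of fun i j => inner 𝕜 (u i) (v j))
        (of fun i j => inner 𝕜 (u i) (v j))ᴴ (gram 𝕜 v) := by
  ext (i | i) (j | j) <;> simp

end CorrelationMatrix

section QuantumCorrelation

variable {ι κ E : Type*} [NormedAddCommGroup E] [InnerProductSpace ℂ E] [FiniteDimensional ℂ E]

theorem quantumCorrelation_of_norm_eq_one {u : ι → E} {v : κ → E} (hu : ∀ i, ‖u i‖ = 1)
    (hv : ∀ j, ‖v j‖ = 1) : QuantumCorrelation (of fun i j => inner ℂ (u i) (v j)) := by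
  let b := stdOrthonormalBasis ℂ E
  exact ⟨_, fun i => b.repr (u i), fun j => b.repr (v j), fun i => by rw [b.repr.norm_map, hu],
    fun j => by rw [b.repr.norm_map, hv], fun i j => (b.repr.inner_map_map _ _).symm⟩

theorem quantumCorrelation_of_norm_le_one {u : ι → E} {v : κ → E} (hu : ∀ i, ‖u i‖ ≤ 1)
    (hv : ∀ j, ‖v j‖ ≤ 1) : QuantumCorrelation (of fun i j => inner ℂ (u i) (v j)) := by
  let defect (x : E) : ℂ := (√(1 - ‖x‖ ^ 2) : ℝ)
  have norm_sq_defect {x : E} (hx : ‖x‖ ≤ 1) : ‖defect x‖ ^ 2 = 1 - ‖x‖ ^ 2 := by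
    have : 0 ≤ 1 - ‖x‖ ^ 2 := sub_nonneg.mpr (pow_le_one₀ (norm_nonneg x) hx)
    rw [Complex.norm_real, Real.norm_eq_abs, sq_abs, Real.sq_sqrt this]
  let u' (i : ι) : WithLp 2 (E × WithLp 2 (ℂ × ℂ)) := .toLp 2 (u i, .toLp 2 (defect (u i), 0))
  let v' (j : κ) : WithLp 2 (E × WithLp 2 (ℂ × ℂ)) := .toLp 2 (v j, .toLp 2 (0, defect (v j)))
  have hu' (i : ι) : ‖u' i‖ = 1 := by
    rw [← pow_eq_one_iff_of_nonneg (norm_nonneg _) two_ne_zero]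
    simp [u', WithLp.prod_norm_sq_eq_of_L2, norm_sq_defect (hu i)]
  have hv' (j : κ) : ‖v' j‖ = 1 := by
    rw [← pow_eq_one_iff_of_nonneg (norm_nonneg _) two_ne_zero]
    simp [v', WithLp.prod_norm_sq_eq_of_L2, norm_sq_defect (hv j)]
  have inner_eq (i : ι) (j : κ) : inner ℂ (u' i) (v' j) = inner ℂ (u i) (v j) := by
    simp [u', v', WithLp.prod_inner_apply]
  simpa only [inner_eq] using quantumCorrelation_of_norm_eq_one hu' hv'

theorem quantumCorrelation_iff_exists_fromBlocks [Finite ι] [Finite κ] {S : Matrix ι κ ℂ} :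
    QuantumCorrelation S ↔
      ∃ (A : Matrix ι ι ℂ) (B : Matrix κ κ ℂ), IsCorrelationMatrix A ∧ IsCorrelationMatrix B ∧
        IsCorrelationMatrix (fromBlocks A S Sᴴ B) := by
  have := Fintype.ofFinite ι
  have := Fintype.ofFinite κ
  constructor
  · rintro ⟨d, u, v, hu, hv, hS⟩
    obtain rfl : S = of fun i j => inner ℂ (u i) (v j) := Matrix.ext hS
    refine ⟨gram ℂ u, gram ℂ v, isCorrelationMatrix_gram_iff.mpr hu,
      isCorrelationMatrix_gram_iff.mpr hv, ?_⟩
    rw [← gram_sumElim]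
    exact isCorrelationMatrix_gram_iff.mpr (Sum.forall.mpr ⟨hu, hv⟩)
  · rintro ⟨A, B, -, -, hM⟩
    obtain ⟨w, hw, hwM⟩ := hM.exists_gram_eq
    have hS : S = of fun i j => inner ℂ (w (.inl i)) (w (.inr j)) :=
      Matrix.ext fun i j => (congr_fun₂ hwM (.inl i) (.inr j)).symm
    rw [hS]
    exact quantumCorrelation_of_norm_eq_one (fun i => hw (.inl i)) (fun j => hw (.inr j))

theorem QuantumCorrelation.smul_add_smul {S₁ S₂ : Matrix ι κ ℂ} (h₁ : QuantumCorrelation S₁)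
    (h₂ : QuantumCorrelation S₂) {lam mu : ℂ} (hle : ‖lam‖ + ‖mu‖ ≤ 1) :
    QuantumCorrelation (lam • S₁ + mu • S₂) := by
  obtain ⟨d₁, u₁, v₁, hu₁, hv₁, hS₁⟩ := h₁
  obtain ⟨d₂, u₂, v₂, hu₂, hv₂, hS₂⟩ := h₂
  obtain ⟨c, rfl⟩ := IsAlgClosed.exists_pow_nat_eq lam two_pos
  obtain ⟨e, rfl⟩ := IsAlgClosed.exists_pow_nat_eq mu two_pos
  rw [norm_pow, norm_pow] at hle
  let u (i : ι) : WithLp 2 (EuclideanSpace ℂ (Fin d₁) × EuclideanSpace ℂ (Fin d₂)) :=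
    .toLp 2 (star c • u₁ i, star e • u₂ i)
  let v (j : κ) : WithLp 2 (EuclideanSpace ℂ (Fin d₁) × EuclideanSpace ℂ (Fin d₂)) :=
    .toLp 2 (c • v₁ j, e • v₂ j)
  have hu (i : ι) : ‖u i‖ ≤ 1 := by
    rw [← sq_le_one_iff₀ (norm_nonneg _)]
    simpa [u, WithLp.prod_norm_sq_eq_of_L2, norm_smul, hu₁, hu₂] using hle
  have hv (j : κ) : ‖v j‖ ≤ 1 := by
    rw [← sq_le_one_iff₀ (norm_nonneg _)]
    simpa [v, WithLp.prod_norm_sq_eq_of_L2, norm_smul, hv₁, hv₂] using hle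
  have hS : c ^ 2 • S₁ + e ^ 2 • S₂ = of fun i j => inner ℂ (u i) (v j) := by
    ext i j
    simp only [Matrix.add_apply, Matrix.smul_apply, hS₁, hS₂, of_apply, u, v,
      WithLp.prod_inner_apply, inner_smul_left, inner_smul_right, smul_eq_mul, Complex.star_def,
      Complex.conj_conj]
    ring
  rw [hS]
  exact quantumCorrelation_of_norm_le_one hu hv

end QuantumCorrelation

theorem quantumCorrelation_block_characterisation_and_absolutelyConvex_general
    {ι κ : Type*} [Finite ι] [Finite κ] :
    (∀ S : Matrix ι κ ℂ,
      QuantumCorrelation S ↔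
        ∃ (A : Matrix ι ι ℂ) (B : Matrix κ κ ℂ),
          IsCorrelationMatrix A ∧ IsCorrelationMatrix B ∧
          IsCorrelationMatrix (fromBlocks A S Sᴴ B)) ∧
    ∀ (S₁ S₂ : Matrix ι κ ℂ) (lam mu : ℂ),
      QuantumCorrelation S₁ → QuantumCorrelation S₂ →
      ‖lam‖ + ‖mu‖ ≤ 1 →
      QuantumCorrelation (lam • S₁ + mu • S₂) :=
  ⟨fun _ => quantumCorrelation_iff_exists_fromBlocks, fun _ _ _ _ h₁ h₂ => h₁.smul_add_smul h₂⟩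

/-- Block-completion characterisation of quantum correlation matrices, and absolute
convexity of `Q_{m,n}`. -/
theorem quantumCorrelation_block_characterisation_and_absolutelyConvex (m n : ℕ) :
    (∀ S : Matrix (Fin m) (Fin n) ℂ,
      QuantumCorrelation S ↔
        ∃ (A : Matrix (Fin m) (Fin m) ℂ) (B : Matrix (Fin n) (Fin n) ℂ),
          (A.PosSemidef ∧ ∀ i, A i i = 1) ∧ (B.PosSemidef ∧ ∀ j, B j j = 1) ∧
          (Matrix.fromBlocks A S Sᴴ B).PosSemidef ∧
          (∀ i, Matrix.fromBlocks A S Sᴴ B i i = 1)) ∧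
    ∀ (S₁ S₂ : Matrix (Fin m) (Fin n) ℂ) (lam mu : ℂ),
      QuantumCorrelation S₁ → QuantumCorrelation S₂ →
      ‖lam‖ + ‖mu‖ ≤ 1 →
      QuantumCorrelation (lam • S₁ + mu • S₂) := by
  exact quantumCorrelation_block_characterisation_and_absolutelyConvex_general
end

section
/- Power version of Stein's Lemma: let m ∈ ℕ and let f : ℝ → ℝ be m-times continuously differentiable such that every iterated derivative f^{(l)}, 0 ≤ l ≤ m, is square-integrable with respect to γ. Then ∫_ℝ f(x) · x^m dγ(x) = ∑_{ν=0}^{⌊m/2⌋} binom(m, 2ν) · (2ν − 1)!! · ∫_ℝ f^{(m−2ν)}(x) dγ(x), where (2ν−1)!! denotes the double factorial with (−1)!! = 1. -/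
open MeasureTheory ProbabilityTheory

/-!
Since the Gaussian density `φ` satisfies `v φ' = -(x - μ) φ`, integrating `(φ h)'` over the line
gives Stein's identity `∫ (x - μ) h dγ = v ∫ h' dγ`. For `h = (x - μ) ^ (k + 1) f` it reads
`∫ (x - μ) ^ (k + 2) f = v (∫ (x - μ) ^ (k + 1) f' + (k + 1) ∫ (x - μ) ^ k f)`.
The number `M(m, ν)` of `ν`-edge matchings of the complete graph on `m` vertices obeys the same
recurrence, `M(m + 2, ν + 1) = M(m + 1, ν + 1) + (m + 1) M(m, ν)`: a new vertex is either unmatched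
or matched with one of the `m + 1` others.
-/

open scoped NNReal ENNReal Nat

section Matchings

/-- The number of `ν`-edge matchings of the complete graph on `m` vertices, in closed form: choose
the `2 * ν` matched vertices, then pair them up. These are the coefficients in the power version of
Stein's lemma. For `ν = 0` the truncated subtraction gives `0‼ = 1`, the value of `(-1)‼`. -/
def matchingNumber (m ν : ℕ) : ℕ :=
  m.choose (2 * ν) * (2 * ν - 1)‼

lemma matchingNumber_zero_right (m : ℕ) : matchingNumber m 0 = 1 := by
  simp [matchingNumber]

lemma matchingNumber_eq_zero_of_lt {m ν : ℕ} (h : m < 2 * ν) : matchingNumber m ν = 0 := by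
  rw [matchingNumber, Nat.choose_eq_zero_of_lt h, zero_mul]

lemma matchingNumber_add_two_succ (m ν : ℕ) :
    matchingNumber (m + 2) (ν + 1) =
      matchingNumber (m + 1) (ν + 1) + (m + 1) * matchingNumber m ν := by
  have doubleFactorial_step : (2 * (ν + 1) - 1)‼ = (2 * ν + 1) * (2 * ν - 1)‼ :=
    Nat.doubleFactorial_add_one (2 * ν)
  have pascal : (m + 2).choose (2 * (ν + 1)) =
      (m + 1).choose (2 * ν + 1) + (m + 1).choose (2 * (ν + 1)) :=
    Nat.choose_succ_succ (m + 1) (2 * ν + 1)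
  have absorption := Nat.add_one_mul_choose_eq m (2 * ν)
  simp only [matchingNumber, doubleFactorial_step, pascal]
  zify at absorption ⊢
  linear_combination (-((2 * ν - 1)‼ : ℤ)) * absorption

lemma sum_matchingNumber_add_two_smul {A : Type*} [AddCommMonoid A] (m : ℕ) (a : ℕ → A) :
    ∑ ν ∈ Finset.range ((m + 2) / 2 + 1), matchingNumber (m + 2) ν • a ν =
      ∑ ν ∈ Finset.range ((m + 1) / 2 + 1), matchingNumber (m + 1) ν • a ν +
        (m + 1) • ∑ ν ∈ Finset.range (m / 2 + 1), matchingNumber m ν • a (ν + 1) := by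
  have extend_range : ∑ ν ∈ Finset.range ((m + 1) / 2 + 1), matchingNumber (m + 1) ν • a ν =
      ∑ ν ∈ Finset.range (m / 2 + 1 + 1), matchingNumber (m + 1) ν • a ν := by
    refine Finset.sum_subset (Finset.range_mono (by omega)) fun ν _ hν ↦ ?_
    rw [Finset.mem_range] at hν
    rw [matchingNumber_eq_zero_of_lt (by omega), zero_smul]
  rw [extend_range, show (m + 2) / 2 + 1 = m / 2 + 1 + 1 by omega, Finset.sum_range_succ',
    Finset.sum_range_succ' _ (m / 2 + 1), Finset.smul_sum, add_right_comm,
    ← Finset.sum_add_distrib]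
  simp only [matchingNumber_zero_right, matchingNumber_add_two_succ, add_smul, mul_smul]

lemma sum_matchingNumber_add_two_smul_pow_smul {R A : Type*} [Semiring R] [AddCommMonoid A]
    [Module R A] (m : ℕ) (c : R) (a : ℕ → A) :
    ∑ ν ∈ Finset.range ((m + 2) / 2 + 1),
        matchingNumber (m + 2) ν • c ^ (m + 2 - ν) • a (m + 2 - 2 * ν) =
      c • (∑ ν ∈ Finset.range ((m + 1) / 2 + 1),
          matchingNumber (m + 1) ν • c ^ (m + 1 - ν) • a (m + 1 - 2 * ν + 1) +
        (m + 1) • ∑ ν ∈ Finset.range (m / 2 + 1),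
          matchingNumber m ν • c ^ (m - ν) • a (m - 2 * ν)) := by
  have unmatched : c • ∑ ν ∈ Finset.range ((m + 1) / 2 + 1),
        matchingNumber (m + 1) ν • c ^ (m + 1 - ν) • a (m + 1 - 2 * ν + 1) =
      ∑ ν ∈ Finset.range ((m + 1) / 2 + 1),
        matchingNumber (m + 1) ν • c ^ (m + 2 - ν) • a (m + 2 - 2 * ν) := by
    rw [Finset.smul_sum]
    refine Finset.sum_congr rfl fun ν hν ↦ ?_
    have hν := Finset.mem_range.1 hν
    rw [smul_comm c, smul_smul c, ← pow_succ', show m + 1 - ν + 1 = m + 2 - ν by omega,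
      show m + 1 - 2 * ν + 1 = m + 2 - 2 * ν by omega]
  have matched : c • ∑ ν ∈ Finset.range (m / 2 + 1),
        matchingNumber m ν • c ^ (m - ν) • a (m - 2 * ν) =
      ∑ ν ∈ Finset.range (m / 2 + 1),
        matchingNumber m ν • c ^ (m + 2 - (ν + 1)) • a (m + 2 - 2 * (ν + 1)) := by
    rw [Finset.smul_sum]
    refine Finset.sum_congr rfl fun ν hν ↦ ?_
    have hν := Finset.mem_range.1 hν
    rw [smul_comm c, smul_smul c, ← pow_succ', show m - ν + 1 = m + 2 - (ν + 1) by omega,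
      show m - 2 * ν = m + 2 - 2 * (ν + 1) by omega]
  rw [smul_add, smul_comm c (m + 1), unmatched, matched]
  exact sum_matchingNumber_add_two_smul m fun ν ↦ c ^ (m + 2 - ν) • a (m + 2 - 2 * ν)

end Matchings

section Gaussian

variable {μ : ℝ} {v : ℝ≥0} {E : Type*} [NormedAddCommGroup E] [NormedSpace ℝ E]

lemma hasDerivAt_gaussianPDFReal (μ : ℝ) (v : ℝ≥0) (x : ℝ) :
    HasDerivAt (gaussianPDFReal μ v) (-((v : ℝ)⁻¹ * (x - μ)) * gaussianPDFReal μ v x) x := by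
  have exponent : HasDerivAt (fun y ↦ -(y - μ) ^ 2 / (2 * v)) (-((v : ℝ)⁻¹ * (x - μ))) x := by
    convert! (((hasDerivAt_id x).sub_const μ).pow 2).neg.div_const (2 * (v : ℝ)) using 1
    simp only [id_eq]
    ring
  rw [gaussianPDFReal_def]
  convert! exponent.exp.const_mul (√(2 * Real.pi * v))⁻¹ using 1
  ring

lemma integrable_gaussianReal_iff (hv : v ≠ 0) {f : ℝ → E} :
    Integrable f (gaussianReal μ v) ↔ Integrable (fun x ↦ gaussianPDFReal μ v x • f x) := by
  rw [gaussianReal_of_var_ne_zero μ hv,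
    integrable_withDensity_iff_integrable_smul' (measurable_gaussianPDF μ v)
      (ae_of_all _ fun _ ↦ gaussianPDF_lt_top)]
  simp only [toReal_gaussianPDF]

lemma memLp_sub_pow_gaussianReal (k : ℕ) {p : ℝ≥0∞} (hp : p ≠ ∞) :
    MemLp (fun x ↦ (x - μ) ^ k) p (gaussianReal μ v) := by
  rcases eq_or_ne k 0 with rfl | hk
  · simpa only [pow_zero] using memLp_const 1
  have sub_mem : MemLp (fun x ↦ x - μ) (p * k) (gaussianReal μ v) :=
    (memLp_id_gaussianReal' _ (ENNReal.mul_ne_top hp (by simp))).sub (memLp_const μ)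
  rw [← memLp_norm_iff (by fun_prop)]
  simpa [ENNReal.mul_div_cancel_right, hk] using sub_mem.norm_rpow_div k

lemma integrable_sub_pow_smul_gaussianReal_of_memLp {p : ℝ≥0∞} (hp : 1 < p) {f : ℝ → E}
    (hf : MemLp f p (gaussianReal μ v)) (k : ℕ) :
    Integrable (fun x ↦ (x - μ) ^ k • f x) (gaussianReal μ v) := by
  have conj : p.HolderConjugate p.conjExponent := .conjExponent hp.le
  have conj_ne_top : p.conjExponent ≠ ∞ :=
    ((ENNReal.HolderConjugate.lt_top_iff_one_lt _ p).2 hp).ne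
  exact memLp_one_iff_integrable.1 (hf.smul (memLp_sub_pow_gaussianReal k conj_ne_top))

variable [CompleteSpace E]

theorem integral_sub_smul_gaussianReal {h h' : ℝ → E} (hderiv : ∀ x, HasDerivAt h (h' x) x)
    (hh : Integrable h (gaussianReal μ v)) (hh' : Integrable h' (gaussianReal μ v))
    (hxh : Integrable (fun x ↦ (x - μ) • h x) (gaussianReal μ v)) :
    ∫ x, (x - μ) • h x ∂(gaussianReal μ v) = (v : ℝ) • ∫ x, h' x ∂(gaussianReal μ v) := by
  rcases eq_or_ne v 0 with rfl | hv
  · -- `gaussianReal μ 0` is the Dirac mass at `μ`, where `x - μ` vanishes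
    simp
  have deriv_density_smul (x : ℝ) : HasDerivAt (fun x ↦ gaussianPDFReal μ v x • h x)
      (gaussianPDFReal μ v x • (h' x - (v : ℝ)⁻¹ • (x - μ) • h x)) x := by
    convert! (hasDerivAt_gaussianPDFReal μ v x).smul (hderiv x) using 1
    module
  have hxh_scaled := hxh.fun_smul (v : ℝ)⁻¹
  have integral_eq_zero : ∫ x, (h' x - (v : ℝ)⁻¹ • (x - μ) • h x) ∂(gaussianReal μ v) = 0 := by
    rw [integral_gaussianReal_eq_integral_smul hv]
    exact integral_eq_zero_of_hasDerivAt_of_integrable deriv_density_smul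
      ((integrable_gaussianReal_iff hv).1 (hh'.sub hxh_scaled))
      ((integrable_gaussianReal_iff hv).1 hh)
  rw [integral_sub hh' hxh_scaled, integral_smul, sub_eq_zero] at integral_eq_zero
  rw [integral_eq_zero, smul_inv_smul₀ (NNReal.coe_ne_zero.2 hv)]

-- At `k = 0` the exponent `k - 1` is truncated, but its term has coefficient `0`.
lemma integral_sub_pow_succ_smul_gaussianReal {f : ℝ → E} {k : ℕ} (hd : Differentiable ℝ f)
    (hf : ∀ j ≤ k + 1, Integrable (fun x ↦ (x - μ) ^ j • f x) (gaussianReal μ v))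
    (hf' : Integrable (fun x ↦ (x - μ) ^ k • deriv f x) (gaussianReal μ v)) :
    ∫ x, (x - μ) ^ (k + 1) • f x ∂(gaussianReal μ v) =
      (v : ℝ) • (∫ x, (x - μ) ^ k • deriv f x ∂(gaussianReal μ v) +
        k • ∫ x, (x - μ) ^ (k - 1) • f x ∂(gaussianReal μ v)) := by
  have deriv_pow_smul (x : ℝ) : HasDerivAt (fun x ↦ (x - μ) ^ k • f x)
      ((x - μ) ^ k • deriv f x + (k : ℝ) • (x - μ) ^ (k - 1) • f x) x := by
    convert! (((hasDerivAt_id x).sub_const μ).pow k).smul (hd x).hasDerivAt using 1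
    simp only [id_eq, Pi.pow_apply]
    module
  have hf_lower := (hf (k - 1) (by omega)).fun_smul (k : ℝ)
  have stein := integral_sub_smul_gaussianReal deriv_pow_smul (hf k (by omega))
    (hf'.add hf_lower) (by simpa only [smul_smul, ← pow_succ'] using hf (k + 1) le_rfl)
  simp only [smul_smul (_ - _), ← pow_succ'] at stein
  rw [stein, integral_add hf' hf_lower, integral_smul, Nat.cast_smul_eq_nsmul]

theorem stein_lemma_power_version_general (m : ℕ) (f : ℝ → E)
    (hf : ∀ l < m, Differentiable ℝ (iteratedDeriv l f))
    (hint : ∀ k l, k + l ≤ m →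
      Integrable (fun x ↦ (x - μ) ^ k • iteratedDeriv l f x) (gaussianReal μ v)) :
    ∫ x, (x - μ) ^ m • f x ∂(gaussianReal μ v) =
      ∑ ν ∈ Finset.range (m / 2 + 1), matchingNumber m ν •
        (v : ℝ) ^ (m - ν) • ∫ x, iteratedDeriv (m - 2 * ν) f x ∂(gaussianReal μ v) := by
  induction m using Nat.twoStepInduction generalizing f with
  | zero => simp [matchingNumber_zero_right]
  | one =>
    have hd : Differentiable ℝ f := by simpa using hf 0 (by omega)
    have stein := integral_sub_pow_succ_smul_gaussianReal (k := 0) hd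
      (fun j hj ↦ by simpa using hint j 0 hj) (by simpa using hint 0 1 le_rfl)
    simpa [matchingNumber_zero_right] using stein
  | more m ih ih_succ =>
    have hd : Differentiable ℝ f := by simpa using hf 0 (by omega)
    have ih_deriv := ih_succ (deriv f)
      (fun l hl ↦ by simpa only [← iteratedDeriv_succ'] using hf (l + 1) (by omega))
      (fun k l hkl ↦ by simpa only [← iteratedDeriv_succ'] using hint k (l + 1) (by omega))
    have ih_self := ih f (fun l hl ↦ hf l (by omega)) (fun k l hkl ↦ hint k l (by omega))
    simp only [← iteratedDeriv_succ'] at ih_deriv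
    rw [integral_sub_pow_succ_smul_gaussianReal hd
      (fun j hj ↦ by simpa only [iteratedDeriv_zero] using hint j 0 hj)
      (by simpa only [iteratedDeriv_one] using hint (m + 1) 1 le_rfl),
      Nat.add_sub_cancel, ih_deriv, ih_self]
    exact (sum_matchingNumber_add_two_smul_pow_smul m (v : ℝ)
      fun l ↦ ∫ x, iteratedDeriv l f x ∂(gaussianReal μ v)).symm

end Gaussian

/-- Power version of Stein's Lemma: for an `m`-times continuously differentiable `f`
with all iterated derivatives up to order `m` square-integrable against the standard
Gaussian measure `γ`,
`∫ f(x) xᵐ dγ = ∑_{ν=0}^{⌊m/2⌋} C(m, 2ν) (2ν−1)!! ∫ f^{(m−2ν)} dγ`. -/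
theorem stein_lemma_power_version (m : ℕ) (f : ℝ → ℝ)
    (hf : ContDiff ℝ (m : ℕ∞) f)
    (hint : ∀ l ≤ m, MemLp (iteratedDeriv l f) 2 (gaussianReal 0 1)) :
    ∫ x, f x * x ^ m ∂(gaussianReal 0 1) =
      ∑ ν ∈ Finset.range (m / 2 + 1),
        (m.choose (2 * ν) : ℝ) * (Nat.doubleFactorial (2 * ν - 1) : ℝ) *
          ∫ x, iteratedDeriv (m - 2 * ν) f x ∂(gaussianReal 0 1) := by
  simpa [matchingNumber, mul_comm (f _)] using stein_lemma_power_version_general (μ := 0) (v := 1)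
    m f (fun l hl ↦ hf.differentiable_iteratedDeriv l (by exact_mod_cast hl)) fun k l hkl ↦
      integrable_sub_pow_smul_gaussianReal_of_memLp ENNReal.one_lt_two (hint l (by omega)) k
end

section
/- Determinant formula in terms of ordinary partial Bell polynomials: let m ≥ 1, 1 ≤ r ≤ m, and x_1, …, x_r ∈ ℂ. Let y be the interleaved sequence of length 2r given by y_{2i−1} = 0 and y_{2i} = x_i for 1 ≤ i ≤ r. Then det( B_{2m+1}[2r](y_1, …, y_{2r}) ) = (2r)! · ∑_{l=1}^{r} (−1)^l · binom(2m + l, l) · B°_{r,l}(x_1, …, x_{r−l+1}). -/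
open scoped BigOperators

/-- Ordinary partial Bell polynomials `B°_{q,l}(x₁, x₂, …)` (indices of `x` start
at 1): `B°_{q,0} = 1` if `q = 0` and `0` otherwise, and
`B°_{q,l}(x) = ∑_{i=1}^{q−l+1} xᵢ B°_{q−i,l−1}(x)` for `l ≥ 1`. -/
noncomputable def bellOrd (x : ℕ → ℂ) : ℕ → ℕ → ℂ
  | q, 0 => if q = 0 then 1 else 0
  | q, l + 1 => ∑ i ∈ Finset.Icc 1 (q - l), x i * bellOrd x (q - i) l

/-- The `p × p` matrix `B_N[p](y₁, …, y_p)` with (1-based) entries `0` if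
`j ≥ i + 2`, `i` if `j = i + 1`, and `((i − j + 1)N + j − 1)·y_{i−j+1}` if
`j ≤ i`. -/
def BMat (N p : ℕ) (y : ℕ → ℂ) : Matrix (Fin p) (Fin p) ℂ :=
  Matrix.of fun i j =>
    if (i : ℕ) + 2 ≤ (j : ℕ) then 0
    else if (j : ℕ) = (i : ℕ) + 1 then (((i : ℕ) + 1 : ℕ) : ℂ)
    else ((((i : ℕ) - (j : ℕ) + 1) * N + (j : ℕ) : ℕ) : ℂ) *
      y ((i : ℕ) - (j : ℕ) + 1)

/-!
Write `Y = ∑_{k ≥ 1} y_k X^k` and `E = (1 + Y)^{-N}`. Differentiating `(1 + Y)^N * E = 1` gives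
`(1 + Y) E' + N Y' E = 0`, and comparing coefficients says precisely that the coefficient vector of
`E` is annihilated by every row of the infinite Hessenberg matrix whose leading blocks are the
`B_N[p](y)`. Replacing the first column of a leading block by its product with the truncated vector
leaves a single entry there, so expanding along this column gives
`det B_N[p](y) = (-1)^p p! [X^p] E`. The binomial series turns `[X^p] E` into a sum of Bell
polynomials, and interleaving `x` with zeros replaces `X` by `X ^ 2`.
-/

open PowerSeries Finset

section Hessenberg

variable {R : Type*} [CommRing R]

theorem det_submatrix_val_succ_of_hessenberg {H : Matrix ℕ ℕ R}
    (hH : ∀ i j, i + 2 ≤ j → H i j = 0) (n : ℕ) :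
    (H.submatrix (fun i : Fin n => (i : ℕ)) fun j : Fin n => (j : ℕ) + 1).det =
      ∏ i ∈ range n, H i (i + 1) := by
  rw [Matrix.det_of_isLowerTriangular, ← Fin.prod_univ_eq_prod_range (fun i => H i (i + 1))]
  · rfl
  · intro i j hij
    exact hH _ _ (Nat.succ_le_succ hij)

theorem sum_leadingMinor_row_of_hessenberg {H : Matrix ℕ ℕ R}
    (hH : ∀ i j, i + 2 ≤ j → H i j = 0) {v : ℕ → R} {n : ℕ}
    (hv : ∀ i ≤ n, ∑ j ∈ range (i + 2), H i j * v j = 0) (i : Fin (n + 1)) :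
    ∑ j : Fin (n + 1), v j * H i j =
      if i = Fin.last n then -(H n (n + 1) * v (n + 1)) else 0 := by
  have to_range : ∑ j : Fin (n + 1), v j * H i j = ∑ j ∈ range (n + 1), H i j * v j := by
    simp only [mul_comm (v _), Fin.sum_univ_eq_sum_range (fun j => H i j * v j)]
  rw [to_range]
  split_ifs with hi
  · rw [hi, Fin.val_last, eq_neg_iff_add_eq_zero, ← sum_range_succ, hv n le_rfl]
  · have hin : (i : ℕ) < n := Fin.val_lt_last hi
    rw [← hv i hin.le]
    refine (sum_subset (range_mono (by omega)) fun j _ hj => ?_).symm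
    rw [hH i j (by simpa using hj), zero_mul]

theorem det_leadingMinor_of_hessenberg {H : Matrix ℕ ℕ R} (hH : ∀ i j, i + 2 ≤ j → H i j = 0)
    {v : ℕ → R} {n : ℕ} (hv : ∀ i < n, ∑ j ∈ range (i + 2), H i j * v j = 0) :
    v 0 * (H.submatrix ((↑) : Fin n → ℕ) (↑)).det =
      (-1) ^ n * (∏ i ∈ range n, H i (i + 1)) * v n := by
  cases n with
  | zero => simp
  | succ n =>
    have row_sum := sum_leadingMinor_row_of_hessenberg hH fun i hi => hv i (Nat.lt_succ_of_le hi)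
    set A : Matrix (Fin (n + 1)) (Fin (n + 1)) R := H.submatrix (↑) (↑)
    have minor : (A.submatrix Fin.castSucc Fin.succ).det = ∏ i ∈ range n, H i (i + 1) :=
      det_submatrix_val_succ_of_hessenberg hH n
    calc v 0 * A.det
        = (A.updateCol 0 fun i => ∑ j : Fin (n + 1), v j * H i j).det :=
          (A.det_updateCol_sum 0 fun j => v j).symm
      _ = (-1) ^ n * -(H n (n + 1) * v (n + 1)) * (A.submatrix Fin.castSucc Fin.succ).det := by
          rw [Matrix.det_succ_column_zero, sum_eq_single (Fin.last n)]
          · simp [row_sum, ← Fin.succAbove_zero]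
          · intro i _ hi
            simp [row_sum, hi]
          · simp
      _ = (-1) ^ (n + 1) * (∏ i ∈ range (n + 1), H i (i + 1)) * v (n + 1) := by
          rw [minor, prod_range_succ]
          ring

end Hessenberg

theorem coeff_X_mul_derivative {R : Type*} [CommSemiring R] (f : R⟦X⟧) (n : ℕ) :
    coeff n (X * d⁄dX R f) = n * coeff n f := by
  cases n with
  | zero => simp
  | succ n => rw [coeff_succ_X_mul, coeff_derivative, Nat.cast_succ, mul_comm]

theorem coeff_pow_eq_zero_of_lt {R : Type*} [Semiring R] {f : R⟦X⟧}
    (hf : constantCoeff f = 0) {n l : ℕ} (h : n < l) : coeff n (f ^ l) = 0 :=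
  coeff_of_lt_order _ <| (Nat.cast_lt.2 h).trans_le (le_order_pow_of_constantCoeff_eq_zero l hf)

section NegPow

variable {R : Type*} [CommRing R]

/-- The power `(1 + f)^{-N}` of a power series `f` without constant term, as the binomial series
`(1 + X)^{-N}` evaluated at `f`. Its value is junk if the constant term of `f` is not nilpotent. -/
noncomputable def oneAddNegPow (N : ℕ) (f : R⟦X⟧) : R⟦X⟧ :=
  (binomialSeries R (-N : ℤ)).subst f

variable {f : R⟦X⟧}

theorem one_add_pow_mul_oneAddNegPow (hf : HasSubst f) (N : ℕ) :
    (1 + f) ^ N * oneAddNegPow N f = 1 := by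
  have h : (1 + X) ^ N * binomialSeries R (-N : ℤ) = 1 := by
    rw [← binomialSeries_nat (R := ℤ), ← binomialSeries_add, add_neg_cancel, binomialSeries_zero]
  have h_subst := congrArg (substAlgHom (R := R) hf) h
  rwa [map_mul, map_pow, map_add, map_one, substAlgHom_X, coe_substAlgHom] at h_subst

theorem one_add_mul_derivative_oneAddNegPow (hf : HasSubst f) (N : ℕ) :
    (1 + f) * d⁄dX R (oneAddNegPow N f) = -(N * d⁄dX R f * oneAddNegPow N f) := by
  have h := one_add_pow_mul_oneAddNegPow hf N
  cases N with
  | zero =>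
    rw [pow_zero, one_mul] at h
    simp [h]
  | succ N =>
    have hD := (d⁄dX R).leibniz_of_mul_eq_one ((mul_comm _ _).trans h)
    simp only [Derivation.leibniz_pow, map_add, derivative_one, zero_add,
      Nat.add_sub_cancel, smul_eq_mul, nsmul_eq_mul] at hD
    rw [hD]
    linear_combination -((N + 1 : ℕ) * d⁄dX R f * oneAddNegPow (N + 1) f) * h

theorem sum_antidiagonal_coeff_oneAddNegPow (hf : HasSubst f) (N n : ℕ) :
    ∑ p ∈ antidiagonal n,
        ((p.2 * N + p.1 : ℕ) : R) * coeff p.2 f * coeff p.1 (oneAddNegPow N f) +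
      n * coeff n (oneAddNegPow N f) = 0 := by
  set E := oneAddNegPow N f
  have ode : (X * d⁄dX R E) * f + N • (E * (X * d⁄dX R f)) + X * d⁄dX R E = 0 := by
    rw [nsmul_eq_mul]
    linear_combination X * one_add_mul_derivative_oneAddNegPow hf N
  rw [← map_zero (coeff n), ← ode, map_add, map_add, map_nsmul, coeff_X_mul_derivative,
    coeff_mul, coeff_mul, smul_sum, ← sum_add_distrib]
  congr! 2 with p
  simp only [coeff_X_mul_derivative, nsmul_eq_mul]
  push_cast
  ring

theorem coeff_oneAddNegPow (hf : constantCoeff f = 0) (N n : ℕ) :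
    coeff n (oneAddNegPow N f) =
      ∑ l ∈ range (n + 1), (-1) ^ l * (N.multichoose l : R) * coeff n (f ^ l) := by
  have binomial_coeff (l : ℕ) :
      coeff l (binomialSeries R (-N : ℤ)) = (-1) ^ l * (N.multichoose l : R) := by
    -- The instance `BinomialRing ℤ` computes the left side as `(N + l - 1).choose l`.
    have multichoose_cast : Ring.multichoose (N : ℤ) l = N.multichoose l :=
      congrArg Nat.cast (Nat.multichoose_eq N l).symm
    rw [binomialSeries_coeff, Ring.choose_neg', multichoose_cast]
    simp [Units.smul_def]
  rw [oneAddNegPow, coeff_subst' (.of_constantCoeff_zero' hf),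
    finsum_eq_sum_of_support_subset (s := range (n + 1))]
  · simp only [binomial_coeff, smul_eq_mul]
  · intro l hl
    contrapose! hl
    simp [coeff_pow_eq_zero_of_lt hf (by simpa using hl)]

end NegPow

section GenSeries

variable {R : Type*} [Semiring R]

/-- The generating function `∑_{k ≥ 1} y_k X^k`. The sequence is indexed from `1`, so the value
`y 0` is discarded. -/
noncomputable def genSeries (y : ℕ → R) : R⟦X⟧ :=
  mk fun k => if k = 0 then 0 else y k

theorem constantCoeff_genSeries (y : ℕ → R) : constantCoeff (genSeries y) = 0 := by
  simp [genSeries]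

theorem coeff_succ_genSeries (y : ℕ → R) (k : ℕ) : coeff (k + 1) (genSeries y) = y (k + 1) := by
  simp [genSeries]

/-- The infinite lower Hessenberg matrix whose leading `p × p` block is `B_N[p](y)`. -/
def bellHessenberg (N : ℕ) (y : ℕ → R) : Matrix ℕ ℕ R :=
  Matrix.of fun i j =>
    if i + 2 ≤ j then 0
    else if j = i + 1 then ((i + 1 : ℕ) : R)
    else (((i - j + 1) * N + j : ℕ) : R) * y (i - j + 1)

end GenSeries

section BellHessenberg

variable {R : Type*} [CommRing R]

theorem sum_bellHessenberg_mul_coeff_oneAddNegPow (N : ℕ) (y : ℕ → R) (i : ℕ) :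
    ∑ j ∈ range (i + 2), bellHessenberg N y i j * coeff j (oneAddNegPow N (genSeries y)) = 0 := by
  have hf := HasSubst.of_constantCoeff_zero' (constantCoeff_genSeries y)
  rw [← sum_antidiagonal_coeff_oneAddNegPow hf N (i + 1), Nat.sum_antidiagonal_succ',
    coeff_zero_eq_constantCoeff_apply, constantCoeff_genSeries, mul_zero, zero_mul, zero_add,
    sum_range_succ, Nat.sum_antidiagonal_eq_sum_range_succ_mk]
  congr 1
  · refine sum_congr rfl fun j hj => ?_
    have hj := mem_range.1 hj
    rw [coeff_succ_genSeries, bellHessenberg, Matrix.of_apply, if_neg (by omega),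
      if_neg (by omega)]
  · simp [bellHessenberg]

theorem det_leadingMinor_bellHessenberg (N p : ℕ) (y : ℕ → R) :
    ((bellHessenberg N y).submatrix ((↑) : Fin p → ℕ) (↑)).det =
      (-1) ^ p * (p.factorial : R) * coeff p (oneAddNegPow N (genSeries y)) := by
  have coeff_zero : coeff 0 (oneAddNegPow N (genSeries y)) = 1 := by
    simp [coeff_oneAddNegPow (constantCoeff_genSeries y)]
  have superdiagonal : ∏ i ∈ range p, bellHessenberg N y i (i + 1) = (p.factorial : R) := by
    simp [bellHessenberg, ← prod_range_add_one_eq_factorial]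
  have h := det_leadingMinor_of_hessenberg (n := p)
    (fun i j hij => by simp only [bellHessenberg, Matrix.of_apply, if_pos hij])
    fun i _ => sum_bellHessenberg_mul_coeff_oneAddNegPow N y i
  rwa [coeff_zero, one_mul, superdiagonal] at h

end BellHessenberg

theorem genSeries_interleave_zero {R : Type*} [CommRing R] (x : ℕ → R) :
    genSeries (fun l => if l % 2 = 0 then x (l / 2) else 0) =
      expand 2 two_ne_zero (genSeries x) := by
  ext n
  simp only [genSeries, coeff_mk, coeff_expand, Nat.dvd_iff_mod_eq_zero]
  grind

theorem bellOrd_eq_coeff_genSeries_pow (x : ℕ → ℂ) (q l : ℕ) :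
    bellOrd x q l = coeff q (genSeries x ^ l) := by
  induction l generalizing q with
  | zero => simp [bellOrd, coeff_one]
  | succ l ih =>
    have Icc_subset : Icc 1 (q - l) ⊆ range (q + 1) := fun i => by
      simp only [mem_Icc, mem_range]
      omega
    rw [bellOrd, pow_succ', coeff_mul, Nat.sum_antidiagonal_eq_sum_range_succ_mk,
      ← sum_subset Icc_subset]
    · refine sum_congr rfl fun i hi => ?_
      have hi := mem_Icc.1 hi
      rw [ih, genSeries, coeff_mk, if_neg (by omega)]
    · intro i hiq hil
      rcases Nat.eq_zero_or_pos i with rfl | hi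
      · simp [constantCoeff_genSeries]
      · simp only [mem_range, mem_Icc] at hiq hil
        rw [coeff_pow_eq_zero_of_lt (constantCoeff_genSeries x) (by omega), mul_zero]

theorem det_BMat (N p : ℕ) (y : ℕ → ℂ) :
    (BMat N p y).det =
      (-1) ^ p * (p.factorial : ℂ) * coeff p (oneAddNegPow N (genSeries y)) :=
  det_leadingMinor_bellHessenberg N p y

theorem det_BMat_eq_bell_sum_general (N r : ℕ) (hr : 1 ≤ r) (x : ℕ → ℂ) :
    (BMat N (2 * r) (fun l => if l % 2 = 0 then x (l / 2) else 0)).det =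
      ((2 * r).factorial : ℂ) *
        ∑ l ∈ Icc 1 r, (-1 : ℂ) ^ l * (N.multichoose l : ℂ) * bellOrd x r l := by
  have hx := constantCoeff_genSeries x
  have expand_negPow : oneAddNegPow N (expand 2 two_ne_zero (genSeries x)) =
      expand 2 two_ne_zero (oneAddNegPow N (genSeries x)) :=
    (expand_subst 2 two_ne_zero (.of_constantCoeff_zero' hx) _).symm
  have bell_zero : bellOrd x r 0 = 0 := by rw [bellOrd, if_neg (by omega)]
  rw [det_BMat, genSeries_interleave_zero, expand_negPow, coeff_expand_mul,
    (even_two_mul r).neg_one_pow, one_mul, coeff_oneAddNegPow hx]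
  simp only [← bellOrd_eq_coeff_genSeries_pow]
  rw [range_eq_Ico, sum_eq_sum_Ico_succ_bot (by omega), bell_zero, mul_zero, zero_add,
    zero_add, Ico_add_one_right_eq_Icc]

/-- Determinant formula in terms of ordinary partial Bell polynomials: with `y` the
interleaving `(0, x₁, 0, x₂, …, 0, x_r)`,
`det B_{2m+1}[2r](y) = (2r)! ∑_{l=1}^r (−1)ˡ C(2m+l, l) B°_{r,l}(x₁, …)`. -/
theorem det_BMat_eq_bell_sum (m r : ℕ) (hm : 1 ≤ m) (hr1 : 1 ≤ r) (hrm : r ≤ m)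
    (x : ℕ → ℂ) :
    (BMat (2 * m + 1) (2 * r) (fun l => if l % 2 = 0 then x (l / 2) else 0)).det =
      ((2 * r).factorial : ℂ) *
        ∑ l ∈ Finset.Icc 1 r,
          (-1 : ℂ) ^ l * ((2 * m + l).choose l : ℂ) * bellOrd x r l := by
  simpa [Nat.multichoose_eq, Nat.succ_add] using det_BMat_eq_bell_sum_general (2 * m + 1) r hr1 x
end
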